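/- arXiv:1001.0217 — 2 statements merged into one kernel-verified Lean document; each statement's English description precedes it below -/
import Mathlib

section
/- There exists a constant c' = c'(n) > 0 such that the following holds: let K be a convex body, let δ = min{d > 0 : (1 − d)Δ_n ⊂ K ⊂ Δ_n} be small enough, and suppose all the centroids of facets of Δ_n belong to K. Then, with P and P' the polytopes built from the tangency points x_F and x_F^* over all flags of faces of Δ_n, either vol(K) ≥ vol(P) + c'δ or vol(K°) ≥ vol(P') + c'δ. -/
/-!
Let `δ` be small. All nodes `x s` and `xd s` lie within `O(δ)` of the centroids `c_s` and
`c_s / ‖c_s‖²`, hence the simplices of the flags stay nondegenerate.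

*Volume gain* (`volume_gain`). Suppose `K` contains a point `z` beyond the hyperplane `⟪ℓ, ·⟫ = 1`
through the nodes of a flag `g`, with `⟪ℓ, z⟫ ≥ 1 + η`. The part below this hyperplane of a fixed
cone (`deepCone`), well inside the cone spanned by the nodes of `g`, contains the part of the
polytope in that cone, and its dilate by a factor `1 + s₀ η` lies in `K` and in the cone
(`dilate_mem`). Therefore `vol K` exceeds the volume of the polytope by a multiple of `η`. The
lemma applies both to `K` with the points `x s` and to `K°` with the points `xd s`.

*Duality* (`facet_gap_le`). If both volume inequalities fail, then all these functionals are
bounded by `1 + ε δ` on `K` and on `K°`, respectively, with `ε` as small as desired. Take a flag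
from the vertex `v i` to the facet opposite to `v j`. Its primal functional `ℓ` is close to
`-n v j`, and `ℓ / (1 + ε δ)` belongs to `K°`. The dual functionals are close to the vertices, and
they equal `1` at `w j`, the dual node near `-n v j`. As all displacements are `O(δ)`, replacing a
dual functional by the corresponding vertex costs only `O(δ²)`, which yields
`⟪v i, ℓ⟫ ≤ 1 + O(ε δ + δ²)`. Comparing with `⟪x {i}, ℓ⟫ = 1` shows that `x {i}` is within
`O(ε δ + δ²)` of the facet opposite to `v j`, for every `j ≠ i`.

*Contradiction*. Minimality of `δ` gives a vertex `v i` cut off from `K` by a hyperplane at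
distance comparable to `δ` (`exists_polar_point`). Since the facet centroids belong to `K`, every
point of `K`, in particular `x {i}`, is then at distance at least a multiple of `δ` from some facet
through `v i` (`exists_far_facet`). This is impossible once `ε` and `δ` are small.
-/

open MeasureTheory Metric Set Pointwise RealInnerProductSpace

noncomputable section

abbrev Euc (n : ℕ) : Type := EuclideanSpace ℝ (Fin n)

/-- A convex body: a compact convex set with nonempty interior. -/
def IsConvexBody {n : ℕ} (K : Set (Euc n)) : Prop :=
  IsCompact K ∧ Convex ℝ K ∧ (interior K).Nonempty

/-- The polar body of `K` with center of polarity `z`. -/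
def polarAt {n : ℕ} (K : Set (Euc n)) (z : Euc n) : Set (Euc n) :=
  {y | ∀ x ∈ K, ⟪y, x - z⟫ ≤ 1}

/-- `z` is the Santaló point of `K`: the interior point minimizing the volume
of the polar body `K^z`. -/
def IsSantaloPoint {n : ℕ} (K : Set (Euc n)) (z : Euc n) : Prop :=
  z ∈ interior K ∧ ∀ w ∈ interior K, volume (polarAt K z) ≤ volume (polarAt K w)

/-- `v` lists the vertices of a regular simplex inscribed in the unit sphere:
unit vectors with pairwise inner products `−1/n`. -/
def IsRegularSimplex {n : ℕ} (v : Fin (n + 1) → Euc n) : Prop :=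
  (∀ i, ‖v i‖ = 1) ∧ ∀ i j, i ≠ j → ⟪v i, v j⟫ = -(1 / (n : ℝ))

/-- The simplex with vertex set `v`. -/
def simplexHull {n : ℕ} (v : Fin (n + 1) → Euc n) : Set (Euc n) :=
  convexHull ℝ (Set.range v)

/-- The face of the simplex spanned by the vertices indexed by `s`. -/
def faceOf {n : ℕ} (v : Fin (n + 1) → Euc n) (s : Finset (Fin (n + 1))) : Set (Euc n) :=
  convexHull ℝ (v '' ↑s)

/-- The centroid of the face spanned by the vertices indexed by `s`. -/
def centroidOf {n : ℕ} (v : Fin (n + 1) → Euc n) (s : Finset (Fin (n + 1))) : Euc n :=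
  (s.card : ℝ)⁻¹ • ∑ i ∈ s, v i

/-- `F^⊥ = {y : ⟨x, y⟩ = 0 for all x ∈ F}`. -/
def perpOf {n : ℕ} (F : Set (Euc n)) : Set (Euc n) :=
  {y | ∀ x ∈ F, ⟪x, y⟫ = 0}

/-- The dual face `F^* = {y ∈ Δₙ° : ⟨x, y⟩ = 1 for all x ∈ F}` of the face of the
simplex indexed by `s`. -/
def dualFace {n : ℕ} (v : Fin (n + 1) → Euc n) (s : Finset (Fin (n + 1))) : Set (Euc n) :=
  {y ∈ polarAt (simplexHull v) 0 | ∀ x ∈ faceOf v s, ⟪x, y⟫ = 1}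

/-- The centroid `c_{F^*} = c_F / ‖c_F‖²` of the dual face. -/
def dualCentroid {n : ℕ} (v : Fin (n + 1) → Euc n) (s : Finset (Fin (n + 1))) : Euc n :=
  (‖centroidOf v s‖ ^ 2)⁻¹ • centroidOf v s

/-- `x` is a tangency point of the family of affine subspaces `t'·c + F^⊥` with the
body `K`: the parameter `t` is maximal so that `t·c + F^⊥` meets `K`, and
`x ∈ (t·c + F^⊥) ∩ ∂K`. -/
def IsTangency {n : ℕ} (F : Set (Euc n)) (c : Euc n) (K : Set (Euc n))
    (t : ℝ) (x : Euc n) : Prop :=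
  0 < t ∧ x ∈ frontier K ∧ x ∈ (t • c) +ᵥ perpOf F ∧
    ∀ t' : ℝ, (((t' • c) +ᵥ perpOf F) ∩ K).Nonempty → t' ≤ t

/-- A flag of faces `F₀ ⊂ F₁ ⊂ ⋯ ⊂ F_{n−1}` of the simplex, recorded by the
index sets of their vertices: `g k` has `k+1` elements and the sets increase. -/
def IsFlag {n : ℕ} (g : Fin n → Finset (Fin (n + 1))) : Prop :=
  (∀ k : Fin n, (g k).card = (k : ℕ) + 1) ∧ ∀ j k : Fin n, j ≤ k → g j ⊆ g k

/-- The union, over all flags, of the convex hulls of `0` together with the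
points `w(F₀), …, w(F_{n−1})` assigned to the faces of the flag. -/
def flagPolytope {n : ℕ} (w : Finset (Fin (n + 1)) → Euc n) : Set (Euc n) :=
  ⋃ g ∈ {g : Fin n → Finset (Fin (n + 1)) | IsFlag g},
    convexHull ℝ (insert 0 (Set.range fun k : Fin n => w (g k)))

/-! ### Regular simplices and flags -/

section Simplex

variable {n : ℕ} {v : Fin (n + 1) → Euc n}

theorem exists_combination {x : Fin n → Euc n} (h : LinearIndependent ℝ x) (p : Euc n) :
    ∃ b : Fin n → ℝ, p = ∑ k, b k • x k := by
  have hs : Submodule.span ℝ (Set.range x) = ⊤ :=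
    h.span_eq_top_of_card_eq_finrank' (by simp)
  have hp : p ∈ Submodule.span ℝ (Set.range x) := by rw [hs]; trivial
  obtain ⟨b, hb⟩ := (Submodule.mem_span_range_iff_exists_fun ℝ).1 hp
  exact ⟨b, hb.symm⟩

theorem inner_vertex (hv : IsRegularSimplex v) (i j : Fin (n + 1)) :
    ⟪v i, v j⟫ = (1 + 1 / (n : ℝ)) * (if i = j then 1 else 0) - 1 / (n : ℝ) := by
  by_cases h : i = j
  · subst h
    rw [real_inner_self_eq_norm_sq, hv.1]; simp
  · rw [hv.2 i j h]; simp [h]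

theorem sum_vertex_eq_zero (hn : 0 < n) (hv : IsRegularSimplex v) : ∑ i, v i = 0 := by
  have hn' : (n : ℝ) ≠ 0 := by positivity
  rw [← inner_self_eq_zero (𝕜 := ℝ), sum_inner]
  simp only [inner_sum, inner_vertex hv]
  simp [Finset.sum_sub_distrib]
  field_simp
  ring

theorem sum_inner_vertex_eq_zero (hn : 0 < n) (hv : IsRegularSimplex v) (p : Euc n) :
    ∑ i, ⟪p, v i⟫ = 0 := by
  rw [← inner_sum, sum_vertex_eq_zero hn hv, inner_zero_right]

/-- The vertices span, so a vector is determined by its inner products with them. -/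
theorem eq_zero_of_inner_vertex (hn : 0 < n) (hv : IsRegularSimplex v) {p : Euc n}
    (hp : ∀ i, ⟪p, v i⟫ = 0) : p = 0 := by
  have hn' : (0 : ℝ) < n := by positivity
  have hli : LinearIndependent ℝ (fun k : Fin n => v k.castSucc) := by
    rw [Fintype.linearIndependent_iff]
    intro b hb k
    have h1 : ∀ j, ∑ i : Fin n, b i * ⟪v i.castSucc, v j⟫ = 0 := by
      intro j
      have := congrArg (fun y => ⟪y, v j⟫) hb
      simpa [sum_inner, inner_smul_left] using this
    have h2 := h1 (Fin.last n)
    have h3 := h1 k.castSucc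
    simp only [inner_vertex hv] at h2 h3
    simp [mul_sub, Finset.sum_sub_distrib, ← Finset.sum_mul, (Fin.castSucc_lt_last _).ne] at h2 h3
    rcases h2 with h2 | h2
    · rw [h2] at h3
      have : (1 + (n : ℝ)⁻¹) ≠ 0 := by positivity
      simpa [this] using h3
    · exact absurd h2 hn.ne'
  obtain ⟨b, hb⟩ := exists_combination hli p
  rw [← inner_self_eq_zero (𝕜 := ℝ)]
  nth_rewrite 2 [hb]
  simp [inner_sum, inner_smul_right, hp]

/-- The vertices of a regular simplex form a tight frame. -/
theorem sum_inner_mul_inner (hn : 0 < n) (hv : IsRegularSimplex v) (p q : Euc n) :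
    ∑ i, ⟪p, v i⟫ * ⟪q, v i⟫ = (1 + 1 / (n : ℝ)) * ⟪p, q⟫ := by
  have key : (∑ i, ⟪p, v i⟫ • v i) - (1 + 1 / (n : ℝ)) • p = 0 := by
    apply eq_zero_of_inner_vertex hn hv
    intro j
    rw [inner_sub_left, sum_inner]
    simp only [inner_smul_left, inner_vertex hv]
    have := sum_inner_vertex_eq_zero hn hv p
    simp [mul_sub, Finset.sum_sub_distrib, ← Finset.sum_mul, this]
    ring
  have h := congrArg (fun y => ⟪y, q⟫) (sub_eq_zero.1 key)
  simp only [sum_inner, inner_smul_left] at h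
  simpa [real_inner_comm] using h

/-- As the inner products with the vertices sum to zero, one-sided bounds on them control the
norm. -/
theorem norm_le_of_inner_vertex_le (hn : 0 < n) (hv : IsRegularSimplex v) {p : Euc n} {e : ℝ}
    (hp : ∀ i, ⟪p, v i⟫ ≤ e) : ‖p‖ ≤ 2 * (n + 1) * e := by
  have hn' : (0 : ℝ) < n := by positivity
  have h0 := sum_inner_vertex_eq_zero hn hv p
  have he : 0 ≤ e := by
    by_contra h
    have : ∑ i, ⟪p, v i⟫ < 0 :=
      Finset.sum_neg (fun i _ => lt_of_le_of_lt (hp i) (not_le.1 h)) Finset.univ_nonempty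
    linarith
  have h1 : ∑ i, |⟪p, v i⟫| ≤ 2 * (n + 1) * e := by
    calc ∑ i, |⟪p, v i⟫| ≤ ∑ i, (2 * e - ⟪p, v i⟫) := by
          refine Finset.sum_le_sum fun i _ => ?_
          rw [abs_le']
          constructor <;> linarith [hp i]
      _ = 2 * (n + 1) * e := by
          rw [Finset.sum_sub_distrib, h0]; simp; ring
  refine le_trans ?_ h1
  have h2 : ‖p‖ ^ 2 ≤ (∑ i, |⟪p, v i⟫|) ^ 2 := by
    calc ‖p‖ ^ 2 = ⟪p, p⟫ := (real_inner_self_eq_norm_sq p).symm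
      _ ≤ (1 + 1 / (n : ℝ)) * ⟪p, p⟫ := by
          have : 0 ≤ ⟪p, p⟫ := real_inner_self_nonneg
          have h3 : 0 ≤ 1 / (n : ℝ) := by positivity
          nlinarith
      _ = ∑ i, |⟪p, v i⟫| ^ 2 := by
          rw [← sum_inner_mul_inner hn hv]
          simp [sq]
      _ ≤ _ := Finset.sum_sq_le_sq_sum_of_nonneg fun i _ => abs_nonneg _
  exact (pow_le_pow_iff_left₀ (norm_nonneg _) (Finset.sum_nonneg fun i _ => abs_nonneg _)
    two_ne_zero).1 h2

theorem inner_centroid_vertex (hv : IsRegularSimplex v)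
    {s : Finset (Fin (n + 1))} (hs : 0 < s.card) (i : Fin (n + 1)) :
    ⟪centroidOf v s, v i⟫ =
      (1 + 1 / (n : ℝ)) / s.card * (if i ∈ s then 1 else 0) - 1 / n := by
  have hs' : (s.card : ℝ) ≠ 0 := by positivity
  rw [centroidOf, inner_smul_left, sum_inner]
  simp only [inner_vertex hv]
  simp [Finset.sum_sub_distrib]
  split_ifs
  · field_simp
  · field_simp
    ring

theorem inner_centroid_sub (hv : IsRegularSimplex v)
    {s : Finset (Fin (n + 1))} (hs : 0 < s.card) (i j : Fin (n + 1)) :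
    ⟪centroidOf v s, v i - v j⟫ = (1 + 1 / (n : ℝ)) / s.card *
      ((if i ∈ s then 1 else 0) - (if j ∈ s then 1 else 0)) := by
  rw [inner_sub_right, inner_centroid_vertex hv hs, inner_centroid_vertex hv hs]
  ring

theorem norm_centroid_sq (hv : IsRegularSimplex v)
    {s : Finset (Fin (n + 1))} (hs : 0 < s.card) :
    ‖centroidOf v s‖ ^ 2 = (1 + 1 / (n : ℝ)) / s.card - 1 / n := by
  have hs' : (s.card : ℝ) ≠ 0 := by positivity
  rw [← real_inner_self_eq_norm_sq]
  nth_rewrite 2 [centroidOf]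
  rw [inner_smul_right, inner_sum]
  rw [Finset.sum_congr rfl (fun i hi => by rw [inner_centroid_vertex hv hs, if_pos hi])]
  simp
  field_simp

theorem norm_centroid_bounds (hv : IsRegularSimplex v)
    {s : Finset (Fin (n + 1))} (hs : 0 < s.card) (hs2 : s.card ≤ n) :
    1 / (n : ℝ) ^ 2 ≤ ‖centroidOf v s‖ ^ 2 ∧ ‖centroidOf v s‖ ^ 2 ≤ 1 := by
  have h1 : (1 : ℝ) ≤ s.card := by exact_mod_cast hs
  have h2 : (s.card : ℝ) ≤ n := by exact_mod_cast hs2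
  have hn : (0 : ℝ) < n := by linarith
  rw [norm_centroid_sq hv hs]
  constructor
  · have : (1 + 1 / (n : ℝ)) / n ≤ (1 + 1 / (n : ℝ)) / s.card := by gcongr
    have e : (1 + 1 / (n : ℝ)) / n = 1 / (n : ℝ) + 1 / (n : ℝ) ^ 2 := by field_simp
    linarith
  · have : (1 + 1 / (n : ℝ)) / s.card ≤ (1 + 1 / (n : ℝ)) / 1 := by gcongr
    linarith

/-- Consecutive sets of a flag differ in one element; the resulting pair of vertices separates
the `k`-th face of the flag from all the others. -/
theorem IsFlag.exists_pair {g : Fin n → Finset (Fin (n + 1))} (hg : IsFlag g) (k : Fin n) :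
    ∃ i j, i ∈ g k ∧ j ∉ g k ∧ ∀ l, l ≠ k → (i ∈ g l ↔ j ∈ g l) := by
  obtain ⟨hc, hm⟩ := hg
  have hi : ∃ i ∈ g k, ∀ l, l < k → i ∉ g l := by
    by_cases h0 : (k : ℕ) = 0
    · obtain ⟨i, hi⟩ : (g k).Nonempty := Finset.card_pos.1 (by rw [hc]; omega)
      exact ⟨i, hi, fun l hl => by have : (l : ℕ) < k := hl; omega⟩
    · let k' : Fin n := ⟨k - 1, by omega⟩
      obtain ⟨i, hi, hi'⟩ := Finset.exists_mem_notMem_of_card_lt_card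
        (s := g k') (t := g k) (by rw [hc, hc]; simp only [k']; omega)
      refine ⟨i, hi, fun l hl h => hi' (hm l k' ?_ h)⟩
      have : (l : ℕ) < k := hl
      show (l : ℕ) ≤ k - 1
      omega
  have hj : ∃ j, j ∉ g k ∧ ∀ l, k < l → j ∈ g l := by
    by_cases h0 : (k : ℕ) + 1 = n
    · obtain ⟨j, -, hj⟩ := Finset.exists_mem_notMem_of_card_lt_card
        (s := g k) (t := Finset.univ) (by rw [hc]; simp)
      exact ⟨j, hj, fun l hl => by have : (k : ℕ) < l := hl; omega⟩
    · let k' : Fin n := ⟨k + 1, by omega⟩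
      obtain ⟨j, hj, hj'⟩ := Finset.exists_mem_notMem_of_card_lt_card
        (s := g k) (t := g k') (by rw [hc, hc]; simp only [k']; omega)
      refine ⟨j, hj', fun l hl => hm k' l ?_ hj⟩
      have : (k : ℕ) < l := hl
      show (k : ℕ) + 1 ≤ l
      omega
  obtain ⟨i, hi, hi'⟩ := hi
  obtain ⟨j, hj, hj'⟩ := hj
  refine ⟨i, j, hi, hj, fun l hl => ?_⟩
  rcases lt_or_gt_of_ne hl with h | h
  · exact ⟨fun h' => absurd h' (hi' l h), fun h' => absurd (hm l k h.le h') hj⟩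
  · exact ⟨fun _ => hj' l h, fun _ => hm k l h.le hi⟩

/-- Two different flags are told apart by a pair of vertices that they order in opposite ways. -/
theorem IsFlag.exists_pair_of_ne {g h : Fin n → Finset (Fin (n + 1))} (hg : IsFlag g)
    (hh : IsFlag h) (hgh : h ≠ g) :
    ∃ k i j, i ∈ g k ∧ j ∉ g k ∧ ∀ l, i ∈ h l → j ∈ h l := by
  obtain ⟨k, hk⟩ := Function.ne_iff.1 hgh
  have hc : (g k).card = (h k).card := by rw [hg.1, hh.1]
  obtain ⟨i, hi, hi'⟩ : ∃ i ∈ g k, i ∉ h k := by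
    by_contra! hcon
    exact hk (Finset.eq_of_subset_of_card_le hcon hc.ge).symm
  obtain ⟨j, hj, hj'⟩ : ∃ j ∈ h k, j ∉ g k := by
    by_contra! hcon
    exact hk (Finset.eq_of_subset_of_card_le hcon hc.le)
  refine ⟨k, i, j, hi, hj', fun l hl => ?_⟩
  rcases le_total k l with h1 | h1
  · exact hh.2 k l h1 hj
  · exact absurd (hh.2 l k h1 hl) hi'

theorem IsFlag.card_pos {g : Fin n → Finset (Fin (n + 1))} (hg : IsFlag g) (k : Fin n) :
    0 < (g k).card := by rw [hg.1]; omega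

theorem IsFlag.card_le {g : Fin n → Finset (Fin (n + 1))} (hg : IsFlag g) (k : Fin n) :
    (g k).card ≤ n := by rw [hg.1]; omega

/-- Any vertex `v i` and any facet through it, here the one opposite to `v j`, are the first and
the last face of a common flag. -/
theorem exists_flag (hn : 0 < n) {i j : Fin (n + 1)} (hij : i ≠ j) :
    ∃ g : Fin n → Finset (Fin (n + 1)), IsFlag g ∧ ∀ k, i ∈ g k ∧ j ∉ g k := by
  obtain ⟨e, hi, hj⟩ : ∃ e : Equiv.Perm (Fin (n + 1)), e i = 0 ∧ e j = Fin.last n := by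
    have h1 : Equiv.swap i 0 j ≠ 0 := by
      intro h
      have : Equiv.swap i 0 i = Equiv.swap i 0 j := by rw [h]; simp
      exact hij ((Equiv.swap i 0).injective this)
    have h2 : (0 : Fin (n + 1)) ≠ Fin.last n := by
      intro h
      have := congrArg Fin.val h
      simp at this
      omega
    refine ⟨(Equiv.swap i 0).trans (Equiv.swap (Equiv.swap i 0 j) (Fin.last n)), ?_, ?_⟩
    · simp [Equiv.swap_apply_of_ne_of_ne h1.symm h2]
    · simp
  refine ⟨fun k => Finset.univ.filter fun m => (e m : ℕ) ≤ k, ⟨fun k => ?_, fun a b hab => ?_⟩,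
    fun k => ?_⟩
  · have : (Finset.univ.filter fun m => (e m : ℕ) ≤ k) =
        (Finset.Iic (k.castSucc)).map e.symm.toEmbedding := by
      ext m
      simp [Finset.mem_map_equiv, Fin.le_def]
    beta_reduce
    rw [this, Finset.card_map]
    simp
  · intro m hm
    simp only [Finset.mem_filter, Finset.mem_univ, true_and] at hm ⊢
    exact hm.trans hab
  · simp [hi, hj]

end Simplex

/-! ### Perturbed nodes of flags -/

section Nodes

variable {n : ℕ} {v : Fin (n + 1) → Euc n}

theorem norm_vertex_sub_le (hv : IsRegularSimplex v) (i j : Fin (n + 1)) : ‖v i - v j‖ ≤ 2 := by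
  calc ‖v i - v j‖ ≤ ‖v i‖ + ‖v j‖ := norm_sub_le _ _
    _ = 2 := by rw [hv.1, hv.1]; norm_num

theorem inner_le_norm_bound {p q : Euc n} {a b : ℝ} (hp : ‖p‖ ≤ a) (hq : ‖q‖ ≤ b) :
    |⟪p, q⟫| ≤ a * b :=
  (abs_real_inner_le_norm p q).trans
    (mul_le_mul hp hq (norm_nonneg _) ((norm_nonneg _).trans hp))

/-- Points within `r` of `τ s • centroidOf v s`, for the faces `s` of the simplex. -/
def NearNodes (v : Fin (n + 1) → Euc n) (τ : Finset (Fin (n + 1)) → ℝ) (r : ℝ)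
    (x : Finset (Fin (n + 1)) → Euc n) : Prop :=
  ∀ s : Finset (Fin (n + 1)), 0 < s.card → s.card ≤ n → ‖x s - τ s • centroidOf v s‖ ≤ r

/-- The scaling factors lie in `[1, T]` on all proper faces. -/
def BoundedScaling (n : ℕ) (T : ℝ) (τ : Finset (Fin (n + 1)) → ℝ) : Prop :=
  ∀ s : Finset (Fin (n + 1)), 0 < s.card → s.card ≤ n → 1 ≤ τ s ∧ τ s ≤ T

theorem inner_node_sub_ge (hv : IsRegularSimplex v) {T : ℝ}
    {τ : Finset (Fin (n + 1)) → ℝ} (hτ : BoundedScaling n T τ) {s : Finset (Fin (n + 1))}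
    (hs : 0 < s.card) (hs2 : s.card ≤ n) {i j : Fin (n + 1)} (hi : i ∈ s) (hj : j ∉ s) :
    1 / (n : ℝ) ≤ ⟪τ s • centroidOf v s, v i - v j⟫ := by
  have h1 : (1 : ℝ) ≤ s.card := by exact_mod_cast hs
  have h2 : (s.card : ℝ) ≤ n := by exact_mod_cast hs2
  have hn : (0 : ℝ) < n := by linarith
  rw [real_inner_smul_left, inner_centroid_sub hv hs, if_pos hi, if_neg hj, sub_zero, mul_one]
  have h3 : 1 / (n : ℝ) ≤ (1 + 1 / (n : ℝ)) / s.card := by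
    have : 0 < 1 / (n : ℝ) := by positivity
    gcongr
    linarith
  have h4 := (hτ s hs hs2).1
  have : 0 < 1 / (n : ℝ) := by positivity
  nlinarith

theorem norm_node_le (hv : IsRegularSimplex v) {T : ℝ}
    {τ : Finset (Fin (n + 1)) → ℝ} (hτ : BoundedScaling n T τ) {s : Finset (Fin (n + 1))}
    (hs : 0 < s.card) (hs2 : s.card ≤ n) : ‖τ s • centroidOf v s‖ ≤ T := by
  have h4 := hτ s hs hs2
  have h5 : ‖centroidOf v s‖ ≤ 1 := by
    have := (norm_centroid_bounds hv hs hs2).2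
    rwa [sq_le_one_iff₀ (norm_nonneg _)] at this
  rw [norm_smul, Real.norm_eq_abs, abs_of_nonneg (by linarith)]
  nlinarith [norm_nonneg (centroidOf v s)]

/-- Each coordinate with respect to the unperturbed nodes of a flag is read off by a difference
of two vertices, by `IsFlag.exists_pair`. -/
theorem sum_abs_le_unperturbed (hv : IsRegularSimplex v) {T : ℝ}
    {τ : Finset (Fin (n + 1)) → ℝ} (hτ : BoundedScaling n T τ)
    {g : Fin n → Finset (Fin (n + 1))} (hg : IsFlag g) (b : Fin n → ℝ) :
    ∑ k, |b k| ≤ 2 * (n : ℝ) ^ 2 * ‖∑ k, b k • τ (g k) • centroidOf v (g k)‖ := by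
  set y := ∑ k, b k • τ (g k) • centroidOf v (g k) with hy
  have key : ∀ k, |b k| ≤ 2 * n * ‖y‖ := by
    intro k
    have hn : (0 : ℝ) < n := by have := k.pos; positivity
    obtain ⟨i, j, hi, hj, hij⟩ := hg.exists_pair k
    have e : ⟪y, v i - v j⟫ = b k * ⟪τ (g k) • centroidOf v (g k), v i - v j⟫ := by
      rw [hy, sum_inner, Finset.sum_eq_single k]
      · rw [real_inner_smul_left]
      · intro l _ hl
        rw [real_inner_smul_left, real_inner_smul_left, inner_centroid_sub hv (hg.card_pos l)]
        simp [hij l hl]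
      · simp
    have h1 := inner_node_sub_ge hv hτ (hg.card_pos k) (hg.card_le k) hi hj
    have h2 : |⟪y, v i - v j⟫| ≤ ‖y‖ * 2 := inner_le_norm_bound le_rfl (norm_vertex_sub_le hv i j)
    rw [e, abs_mul] at h2
    have h3 : |b k| * (1 / n) ≤ ‖y‖ * 2 :=
      (mul_le_mul_of_nonneg_left (h1.trans (le_abs_self _)) (abs_nonneg _)).trans h2
    rw [mul_one_div, div_le_iff₀ hn] at h3
    linarith
  calc ∑ k, |b k| ≤ ∑ _k : Fin n, 2 * n * ‖y‖ := Finset.sum_le_sum fun k _ => key k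
    _ = _ := by simp; ring

theorem norm_sum_perturb_le {τ : Finset (Fin (n + 1)) → ℝ} {r : ℝ}
    {x : Finset (Fin (n + 1)) → Euc n} (hx : NearNodes v τ r x)
    {g : Fin n → Finset (Fin (n + 1))} (hg : IsFlag g) (b : Fin n → ℝ) :
    ‖∑ k, b k • (x (g k) - τ (g k) • centroidOf v (g k))‖ ≤ (∑ k, |b k|) * r := by
  refine (norm_sum_le _ _).trans ?_
  rw [Finset.sum_mul]
  refine Finset.sum_le_sum fun k _ => ?_
  rw [norm_smul, Real.norm_eq_abs]
  exact mul_le_mul_of_nonneg_left (hx _ (hg.card_pos k) (hg.card_le k)) (abs_nonneg _)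

/-- Perturbing the nodes by at most `1 / (4 n ^ 2)` absorbs at most half of the bound of
`sum_abs_le_unperturbed`. -/
theorem sum_abs_le (hn : 0 < n) (hv : IsRegularSimplex v) {T : ℝ}
    {τ : Finset (Fin (n + 1)) → ℝ} (hτ : BoundedScaling n T τ) {r : ℝ}
    (hr : r ≤ 1 / (4 * (n : ℝ) ^ 2)) {x : Finset (Fin (n + 1)) → Euc n} (hx : NearNodes v τ r x)
    {g : Fin n → Finset (Fin (n + 1))} (hg : IsFlag g) (b : Fin n → ℝ) :
    ∑ k, |b k| ≤ 4 * (n : ℝ) ^ 2 * ‖∑ k, b k • x (g k)‖ := by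
  have hn' : (0 : ℝ) < n := by positivity
  have h1 := sum_abs_le_unperturbed hv hτ hg b
  have h2 := norm_sum_perturb_le hx hg b
  have h3 : ∑ k, b k • τ (g k) • centroidOf v (g k) = ∑ k, b k • x (g k) -
      ∑ k, b k • (x (g k) - τ (g k) • centroidOf v (g k)) := by
    rw [← Finset.sum_sub_distrib]
    refine Finset.sum_congr rfl fun k _ => ?_
    rw [smul_sub]; abel
  have h4 : 0 ≤ ∑ k, |b k| := Finset.sum_nonneg fun k _ => abs_nonneg _
  rw [h3] at h1
  have h5 := norm_sub_le (∑ k, b k • x (g k))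
    (∑ k, b k • (x (g k) - τ (g k) • centroidOf v (g k)))
  have h6 : (∑ k, |b k|) * r ≤ (∑ k, |b k|) * (1 / (4 * (n : ℝ) ^ 2)) :=
    mul_le_mul_of_nonneg_left hr h4
  have h7 : ∑ k, |b k| ≤ 2 * (n : ℝ) ^ 2 * (‖∑ k, b k • x (g k)‖ +
      (∑ k, |b k|) * (1 / (4 * (n : ℝ) ^ 2))) :=
    h1.trans (mul_le_mul_of_nonneg_left (by linarith) (by positivity))
  have h8 : 2 * (n : ℝ) ^ 2 * (‖∑ k, b k • x (g k)‖ +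
      (∑ k, |b k|) * (1 / (4 * (n : ℝ) ^ 2))) =
      2 * (n : ℝ) ^ 2 * ‖∑ k, b k • x (g k)‖ + (∑ k, |b k|) / 2 := by
    field_simp
    ring
  linarith

theorem linearIndependent_nodes (hn : 0 < n) (hv : IsRegularSimplex v) {T : ℝ}
    {τ : Finset (Fin (n + 1)) → ℝ} (hτ : BoundedScaling n T τ) {r : ℝ}
    (hr : r ≤ 1 / (4 * (n : ℝ) ^ 2)) {x : Finset (Fin (n + 1)) → Euc n} (hx : NearNodes v τ r x)
    {g : Fin n → Finset (Fin (n + 1))} (hg : IsFlag g) :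
    LinearIndependent ℝ (fun k => x (g k)) := by
  rw [Fintype.linearIndependent_iff]
  intro b hb k
  have h := sum_abs_le hn hv hτ hr hx hg b
  rw [hb, norm_zero, mul_zero] at h
  have h2 := Finset.single_le_sum (f := fun k => |b k|) (fun i _ => abs_nonneg _)
    (Finset.mem_univ k)
  exact abs_nonpos_iff.1 (h2.trans h)

theorem exists_node_coords (hn : 0 < n) (hv : IsRegularSimplex v) {T : ℝ}
    {τ : Finset (Fin (n + 1)) → ℝ} (hτ : BoundedScaling n T τ) {r : ℝ}
    (hr : r ≤ 1 / (4 * (n : ℝ) ^ 2)) {x : Finset (Fin (n + 1)) → Euc n} (hx : NearNodes v τ r x)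
    {g : Fin n → Finset (Fin (n + 1))} (hg : IsFlag g) (p : Euc n) :
    ∃ b : Fin n → ℝ, p = ∑ k, b k • x (g k) ∧ ∑ k, |b k| ≤ 4 * (n : ℝ) ^ 2 * ‖p‖ := by
  have hli := linearIndependent_nodes hn hv hτ hr hx hg
  obtain ⟨b, hb⟩ := exists_combination hli p
  refine ⟨b, hb, ?_⟩
  rw [hb]
  exact sum_abs_le hn hv hτ hr hx hg b

/-- The normal vector of the hyperplane through the perturbed nodes of a flag exists, and is close
to the normal vector `ℓ₀` of the hyperplane through the unperturbed nodes. -/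
theorem exists_normal (hn : 0 < n) (hv : IsRegularSimplex v) {T : ℝ}
    {τ : Finset (Fin (n + 1)) → ℝ} (hτ : BoundedScaling n T τ) {r : ℝ}
    (hr : r ≤ 1 / (4 * (n : ℝ) ^ 2)) {x : Finset (Fin (n + 1)) → Euc n} (hx : NearNodes v τ r x)
    {g : Fin n → Finset (Fin (n + 1))} (hg : IsFlag g) {ℓ₀ : Euc n}
    (hℓ₀ : ∀ k, ⟪ℓ₀, τ (g k) • centroidOf v (g k)⟫ = 1) :
    ∃ ℓ : Euc n, (∀ k, ⟪ℓ, x (g k)⟫ = 1) ∧ ‖ℓ - ℓ₀‖ ≤ 4 * (n : ℝ) ^ 2 * ‖ℓ₀‖ * r := by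
  have hli := linearIndependent_nodes hn hv hτ hr hx hg
  have : Nonempty (Fin n) := ⟨⟨0, hn⟩⟩
  let B := basisOfLinearIndependentOfCardEqFinrank hli (by simp)
  let f : Euc n →ₗ[ℝ] ℝ := B.constr ℝ fun _ => (1 : ℝ)
  let ℓ : Euc n := (InnerProductSpace.toDual ℝ (Euc n)).symm f.toContinuousLinearMap
  have hℓ : ∀ k, ⟪ℓ, x (g k)⟫ = 1 := by
    intro k
    have h1 : ⟪ℓ, x (g k)⟫ = f (x (g k)) := by
      simp [ℓ, InnerProductSpace.toDual_symm_apply]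
    have h2 : B k = x (g k) := by simp [B]
    rw [h1, ← h2]
    simp [f]
  refine ⟨ℓ, hℓ, ?_⟩
  obtain ⟨b, hb, hb'⟩ := exists_node_coords hn hv hτ hr hx hg (ℓ - ℓ₀)
  have e : ‖ℓ - ℓ₀‖ ^ 2 = -⟪ℓ₀, ∑ k, b k • (x (g k) - τ (g k) • centroidOf v (g k))⟫ := by
    rw [← real_inner_self_eq_norm_sq]
    nth_rewrite 2 [hb]
    simp only [inner_sum, real_inner_smul_right, inner_sub_left, inner_sub_right, hℓ, hℓ₀]
    rw [← Finset.sum_neg_distrib]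
    refine Finset.sum_congr rfl fun k _ => ?_
    ring
  have hr0 : 0 ≤ r := (norm_nonneg _).trans
    (hx _ (hg.card_pos ⟨0, hn⟩) (hg.card_le ⟨0, hn⟩))
  have h1 : ‖ℓ - ℓ₀‖ ^ 2 ≤ ‖ℓ₀‖ * ((4 * (n : ℝ) ^ 2 * ‖ℓ - ℓ₀‖) * r) := by
    rw [e]
    refine (neg_le_abs _).trans (inner_le_norm_bound le_rfl ?_)
    exact (norm_sum_perturb_le hx hg b).trans (mul_le_mul_of_nonneg_right hb' hr0)
  by_cases h0 : ‖ℓ - ℓ₀‖ = 0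
  · rw [h0]; positivity
  · have hpos : 0 < ‖ℓ - ℓ₀‖ := lt_of_le_of_ne (norm_nonneg _) (Ne.symm h0)
    refine le_of_mul_le_mul_right ?_ hpos
    calc ‖ℓ - ℓ₀‖ * ‖ℓ - ℓ₀‖ = ‖ℓ - ℓ₀‖ ^ 2 := by ring
      _ ≤ _ := h1
      _ = _ := by ring

end Nodes

/-! ### Volume gain from a point beyond a flag hyperplane -/

section Gain

variable {n : ℕ} {v : Fin (n + 1) → Euc n}

/-- The points lying uniformly deep inside the cone over the barycentric simplex of the flag `g`:
for each `k` the barycentric coordinates of the vertices in `g k`, which are affine functions of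
`⟪p, v i⟫`, exceed those of the other vertices by a margin proportional to the norm. -/
def deepCone (v : Fin (n + 1) → Euc n) (g : Fin n → Finset (Fin (n + 1))) (ε : ℝ) :
    Set (Euc n) :=
  {p | ∀ k i j, i ∈ g k → j ∉ g k → ε * ‖p‖ < ⟪p, v i - v j⟫}

theorem measurableSet_deepCone (g : Fin n → Finset (Fin (n + 1))) (ε : ℝ) :
    MeasurableSet (deepCone v g ε) := by
  have : deepCone v g ε = ⋂ k, ⋂ i, ⋂ j, {p | i ∈ g k → j ∉ g k → ε * ‖p‖ < ⟪p, v i - v j⟫} := by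
    ext p; simp [deepCone]
  rw [this]
  refine MeasurableSet.iInter fun k => MeasurableSet.iInter fun i => MeasurableSet.iInter fun j => ?_
  by_cases hi : i ∈ g k
  · by_cases hj : j ∈ g k
    · simp [hj]
    · simp only [hi, hj, not_false_eq_true, forall_const]
      exact measurableSet_lt (by fun_prop) (by fun_prop)
  · simp [hi]

theorem smul_mem_deepCone {g : Fin n → Finset (Fin (n + 1))} {ε : ℝ} {p : Euc n}
    (hp : p ∈ deepCone v g ε) {c : ℝ} (hc : 0 < c) : c • p ∈ deepCone v g ε := by
  intro k i j hi hj
  have := hp k i j hi hj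
  rw [norm_smul, real_inner_smul_left, Real.norm_eq_abs, abs_of_pos hc]
  nlinarith

/-- The sum of the unperturbed nodes of a flag lies deep in its cone, together with a ball whose
radius depends only on `n`. -/
theorem exists_ball_subset_deepCone (hn : 0 < n) (hv : IsRegularSimplex v) {T : ℝ} (hT : 1 ≤ T)
    {τ : Finset (Fin (n + 1)) → ℝ} (hτ : BoundedScaling n T τ)
    {g : Fin n → Finset (Fin (n + 1))} (hg : IsFlag g) :
    ∃ q : Euc n, ∀ p, ‖p - q‖ < 1 / (4 * n) →
      p ∈ deepCone v g (1 / (4 * n * (n * T + 1))) ∧ ‖p‖ ≤ n * T + 1 := by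
  have hn' : (1 : ℝ) ≤ n := by exact_mod_cast hn
  refine ⟨∑ k, τ (g k) • centroidOf v (g k), fun p hp => ?_⟩
  set q := ∑ k, τ (g k) • centroidOf v (g k) with hq
  have hqn : ‖q‖ ≤ n * T := by
    refine (norm_sum_le _ _).trans ?_
    calc _ ≤ ∑ _k : Fin n, T :=
          Finset.sum_le_sum fun k _ => norm_node_le hv hτ (hg.card_pos k) (hg.card_le k)
      _ = n * T := by simp
  have hr1 : 1 / (4 * (n : ℝ)) ≤ 1 / 4 := by
    rw [div_le_div_iff₀ (by positivity) (by norm_num)]; linarith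
  have hpn : ‖p‖ < n * T + 1 := by
    have : ‖p‖ ≤ ‖p - q‖ + ‖q‖ := by simpa using norm_add_le (p - q) q
    linarith
  refine ⟨fun k i j hi hj => ?_, hpn.le⟩
  have h1 : 1 / (n : ℝ) ≤ ⟪q, v i - v j⟫ := by
    rw [hq, sum_inner]
    refine (inner_node_sub_ge hv hτ (hg.card_pos k) (hg.card_le k) hi hj).trans ?_
    refine Finset.single_le_sum (f := fun l => ⟪τ (g l) • centroidOf v (g l), v i - v j⟫)
      (fun l _ => ?_) (Finset.mem_univ k)
    rw [real_inner_smul_left, inner_centroid_sub hv (hg.card_pos l)]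
    have h2 := (hτ (g l) (hg.card_pos l) (hg.card_le l)).1
    have h3 : j ∈ g l → i ∈ g l := by
      intro hjl
      rcases le_total k l with h | h
      · exact hg.2 k l h hi
      · exact absurd (hg.2 l k h hjl) hj
    have h4 : (0 : ℝ) ≤ (if i ∈ g l then 1 else 0) - (if j ∈ g l then 1 else 0) := by
      by_cases hjl : j ∈ g l
      · simp [hjl, h3 hjl]
      · simp only [hjl, if_false, sub_zero]; split_ifs <;> norm_num
    have h5 : 0 ≤ τ (g l) := by linarith
    positivity
  have h2 : |⟪p - q, v i - v j⟫| ≤ 1 / (4 * n) * 2 :=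
    inner_le_norm_bound hp.le (norm_vertex_sub_le hv i j)
  have h3 : ⟪p, v i - v j⟫ = ⟪q, v i - v j⟫ + ⟪p - q, v i - v j⟫ := by
    rw [inner_sub_left]; ring
  have h4 := neg_le_of_abs_le h2
  have h5 : 1 / (4 * n) * 2 = 1 / (n : ℝ) / 2 := by field_simp; norm_num
  have h7 : 1 / (4 * n * (n * T + 1)) * ‖p‖ ≤ 1 / (4 * n) := by
    have : 1 / (4 * (n : ℝ)) = 1 / (4 * n * (n * T + 1)) * (n * T + 1) := by field_simp
    rw [this]
    exact mul_le_mul_of_nonneg_left hpn.le (by positivity)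
  have h8 : 1 / (4 * (n : ℝ)) < 1 / n / 2 := by
    rw [div_div, div_lt_div_iff₀ (by positivity) (by positivity)]; linarith
  linarith

theorem sum_smul_mem_of_sum_le_one {ι : Type*} {t : Finset ι} {K : Set (Euc n)} (hK : Convex ℝ K)
    (h0 : (0 : Euc n) ∈ K) {w : ι → ℝ} {y : ι → Euc n} (hw : ∀ i ∈ t, 0 ≤ w i)
    (hw1 : ∑ i ∈ t, w i ≤ 1) (hy : ∀ i ∈ t, y i ∈ K) : ∑ i ∈ t, w i • y i ∈ K := by
  rcases (Finset.sum_nonneg hw).eq_or_lt with h | h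
  · have hz := (Finset.sum_eq_zero_iff_of_nonneg hw).1 h.symm
    rw [Finset.sum_eq_zero fun i hi => by rw [hz i hi, zero_smul]]
    exact h0
  · have h1 := hK.centerMass_mem hw h hy
    have h2 := hK.smul_mem_of_zero_mem h0 h1 ⟨h.le, hw1⟩
    rwa [Finset.centerMass, smul_inv_smul₀ h.ne'] at h2

theorem exists_of_mem_convexHull_insert {x : Fin n → Euc n} {p : Euc n}
    (hp : p ∈ convexHull ℝ (insert 0 (Set.range x))) :
    ∃ b : Fin n → ℝ, (∀ k, 0 ≤ b k) ∧ ∑ k, b k ≤ 1 ∧ p = ∑ k, b k • x k := by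
  let C : Set (Euc n) := {p | ∃ b : Fin n → ℝ, (∀ k, 0 ≤ b k) ∧ ∑ k, b k ≤ 1 ∧ p = ∑ k, b k • x k}
  have hC : Convex ℝ C := by
    rintro p ⟨b, hb0, hb1, rfl⟩ q ⟨d, hd0, hd1, rfl⟩ s t hs ht hst
    refine ⟨fun k => s * b k + t * d k, fun k => ?_, ?_, ?_⟩
    · have := hb0 k; have := hd0 k; positivity
    · rw [Finset.sum_add_distrib, ← Finset.mul_sum, ← Finset.mul_sum]
      nlinarith
    · simp only [Finset.smul_sum, ← Finset.sum_add_distrib, add_smul, mul_smul]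
  refine convexHull_min ?_ hC hp
  rintro y (rfl | ⟨k, rfl⟩)
  · exact ⟨0, by simp⟩
  · exact ⟨Pi.single k 1, fun l => by by_cases h : l = k <;> simp [h],
      by simp, by simp [Pi.single_apply]⟩

theorem flagPolytope_subset {K : Set (Euc n)} (hK : Convex ℝ K) (h0 : (0 : Euc n) ∈ K)
    {x : Finset (Fin (n + 1)) → Euc n}
    (hx : ∀ s : Finset (Fin (n + 1)), 0 < s.card → s.card ≤ n → x s ∈ K) :
    flagPolytope x ⊆ K := by
  refine Set.iUnion₂_subset fun g hg => convexHull_min ?_ hK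
  rintro y (rfl | ⟨k, rfl⟩)
  · exact h0
  · exact hx _ (IsFlag.card_pos hg k) (IsFlag.card_le hg k)

/-- Inside the deep cone of `g`, the flag polytope is bounded by the hyperplane through the nodes
of `g`: the simplices of the other flags do not reach into the deep cone. -/
theorem inner_le_one_of_mem (hn : 0 < n) (hv : IsRegularSimplex v) {T : ℝ}
    {τ : Finset (Fin (n + 1)) → ℝ} (hτ : BoundedScaling n T τ) {r ε : ℝ}
    (hr : r ≤ 1 / (4 * (n : ℝ) ^ 2)) (hrε : 2 * r * (4 * (n : ℝ) ^ 2) ≤ ε / 2)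
    {x : Finset (Fin (n + 1)) → Euc n} (hx : NearNodes v τ r x)
    {g : Fin n → Finset (Fin (n + 1))} {ℓ : Euc n} (hg : IsFlag g)
    (hℓ : ∀ k, ⟪ℓ, x (g k)⟫ = 1) {p : Euc n}
    (hp : p ∈ flagPolytope x) (hpC : p ∈ deepCone v g ε) : ⟪ℓ, p⟫ ≤ 1 := by
  obtain ⟨h, hh, hp⟩ := Set.mem_iUnion₂.1 hp
  have hh : IsFlag h := hh
  obtain ⟨b, hb0, hb1, rfl⟩ := exists_of_mem_convexHull_insert hp
  by_cases hgh : h = g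
  · subst hgh
    simpa [inner_sum, real_inner_smul_right, hℓ] using hb1
  · exfalso
    obtain ⟨k, i, j, hi, hj, hl⟩ := hg.exists_pair_of_ne hh hgh
    have h1 := hpC k i j hi hj
    have h2 := sum_abs_le hn hv hτ hr hx hh b
    set p := ∑ k, b k • x (h k) with hpdef
    have hr0 : 0 ≤ r := (norm_nonneg _).trans (hx _ (hh.card_pos k) (hh.card_le k))
    have h3 : ⟪p, v i - v j⟫ ≤ (∑ l, |b l|) * (r * 2) := by
      rw [hpdef, sum_inner, Finset.sum_mul]
      refine Finset.sum_le_sum fun l _ => ?_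
      rw [real_inner_smul_left, abs_of_nonneg (hb0 l)]
      refine mul_le_mul_of_nonneg_left ?_ (hb0 l)
      have e : ⟪x (h l), v i - v j⟫ = τ (h l) * ⟪centroidOf v (h l), v i - v j⟫ +
          ⟪x (h l) - τ (h l) • centroidOf v (h l), v i - v j⟫ := by
        rw [inner_sub_left, real_inner_smul_left]; ring
      have h4 := (le_abs_self _).trans (inner_le_norm_bound
        (hx _ (hh.card_pos l) (hh.card_le l)) (norm_vertex_sub_le hv i j))
      have h5 : τ (h l) * ⟪centroidOf v (h l), v i - v j⟫ ≤ 0 := by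
        rw [inner_centroid_sub hv (hh.card_pos l)]
        have h6 := (hτ (h l) (hh.card_pos l) (hh.card_le l)).1
        refine mul_nonpos_of_nonneg_of_nonpos (by linarith)
          (mul_nonpos_of_nonneg_of_nonpos (by positivity) ?_)
        by_cases hil : i ∈ h l
        · simp [hil, hl l hil]
        · simp only [hil, if_false, zero_sub, neg_nonpos]; split_ifs <;> norm_num
      rw [e]; linarith
    have h4 : (∑ l, |b l|) * (r * 2) ≤ (4 * (n : ℝ) ^ 2 * ‖p‖) * (r * 2) :=
      mul_le_mul_of_nonneg_right h2 (by positivity)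
    have h5 : (2 * r * (4 * (n : ℝ) ^ 2)) * ‖p‖ ≤ ε / 2 * ‖p‖ :=
      mul_le_mul_of_nonneg_right hrε (norm_nonneg _)
    have h6 : 0 ≤ (2 * r * (4 * (n : ℝ) ^ 2)) * ‖p‖ := by positivity
    nlinarith

/-- Coordinates of deep points with respect to the nodes of the flag are bounded below. -/
theorem coord_ge_of_mem_deepCone (hv : IsRegularSimplex v) {T : ℝ}
    {τ : Finset (Fin (n + 1)) → ℝ} (hτ : BoundedScaling n T τ) {r ε : ℝ} (hT : 1 ≤ T)
    (hrε : 2 * r * (4 * (n : ℝ) ^ 2) ≤ ε / 2)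
    {x : Finset (Fin (n + 1)) → Euc n} (hx : NearNodes v τ r x)
    {g : Fin n → Finset (Fin (n + 1))} (hg : IsFlag g) {b : Fin n → ℝ} {p : Euc n}
    (hε : 0 < ε)
    (hb : p = ∑ k, b k • x (g k)) (hbM : ∑ k, |b k| ≤ 4 * (n : ℝ) ^ 2 * ‖p‖)
    (hpC : p ∈ deepCone v g ε) (k : Fin n) : ε / (4 * T) * ‖p‖ ≤ b k := by
  obtain ⟨i, j, hi, hj, hij⟩ := hg.exists_pair k
  have hr0 : 0 ≤ r := (norm_nonneg _).trans (hx _ (hg.card_pos k) (hg.card_le k))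
  have h1 := hpC k i j hi hj
  have e : ⟪p, v i - v j⟫ = b k * ⟪τ (g k) • centroidOf v (g k), v i - v j⟫ +
      ⟪∑ l, b l • (x (g l) - τ (g l) • centroidOf v (g l)), v i - v j⟫ := by
    have e1 : p = ∑ l, b l • τ (g l) • centroidOf v (g l) +
        ∑ l, b l • (x (g l) - τ (g l) • centroidOf v (g l)) := by
      rw [hb, ← Finset.sum_add_distrib]
      refine Finset.sum_congr rfl fun l _ => ?_
      rw [smul_sub]; abel
    nth_rewrite 1 [e1]
    rw [inner_add_left, sum_inner, Finset.sum_eq_single k]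
    · rw [real_inner_smul_left]
    · intro l _ hl
      rw [real_inner_smul_left, real_inner_smul_left, inner_centroid_sub hv (hg.card_pos l)]
      simp [hij l hl]
    · simp
  have h2 := (le_abs_self _).trans (inner_le_norm_bound (norm_sum_perturb_le hx hg b)
    (norm_vertex_sub_le hv i j))
  have h3 := (le_abs_self _).trans (inner_le_norm_bound
    (norm_node_le hv hτ (hg.card_pos k) (hg.card_le k)) (norm_vertex_sub_le hv i j))
  have h3' : 0 < ⟪τ (g k) • centroidOf v (g k), v i - v j⟫ := by
    have hn : (0 : ℝ) < n := by have := k.pos; positivity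
    have := inner_node_sub_ge hv hτ (hg.card_pos k) (hg.card_le k) hi hj
    have : 0 < 1 / (n : ℝ) := by positivity
    linarith
  have h4 : (∑ l, |b l|) * r * 2 ≤ ε / 2 * ‖p‖ := by
    calc (∑ l, |b l|) * r * 2 ≤ (4 * (n : ℝ) ^ 2 * ‖p‖) * r * 2 := by gcongr
      _ = (2 * r * (4 * (n : ℝ) ^ 2)) * ‖p‖ := by ring
      _ ≤ _ := mul_le_mul_of_nonneg_right hrε (norm_nonneg _)
  set D := ⟪τ (g k) • centroidOf v (g k), v i - v j⟫
  have h5 : ε / 2 * ‖p‖ < b k * D := by linarith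
  have h6 : 0 ≤ ε / 2 * ‖p‖ := by positivity
  have h7 : 0 < b k := by
    by_contra hcon
    nlinarith [not_lt.1 hcon]
  have h8 : ε / 2 * ‖p‖ ≤ b k * (T * 2) := by nlinarith
  have h9 : ε / (4 * T) * ‖p‖ = (ε / 2 * ‖p‖) / (T * 2) := by field_simp; ring
  rw [h9, div_le_iff₀ (by positivity)]
  exact h8

/-- A point `z ∈ K` beyond the hyperplane through the nodes of `g` makes the part of the deep cone
below that hyperplane dilate into `K`: each deep point is a nonnegative combination of the
nodes and `z` in which `z` has weight bounded below. -/
theorem dilate_mem (hn : 0 < n) (hv : IsRegularSimplex v) {T R : ℝ} (hT : 1 ≤ T) (hR : 1 ≤ R)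
    {τ : Finset (Fin (n + 1)) → ℝ} (hτ : BoundedScaling n T τ) {r ε : ℝ} (hε : 0 < ε)
    (hr : r ≤ 1 / (4 * (n : ℝ) ^ 2)) (hrε : 2 * r * (4 * (n : ℝ) ^ 2) ≤ ε / 2)
    {x : Finset (Fin (n + 1)) → Euc n} (hx : NearNodes v τ r x)
    {K : Set (Euc n)} (hK : Convex ℝ K) (h0 : (0 : Euc n) ∈ K)
    (hxK : ∀ s : Finset (Fin (n + 1)), 0 < s.card → s.card ≤ n → x s ∈ K)
    {g : Fin n → Finset (Fin (n + 1))} (hg : IsFlag g) {ℓ : Euc n} (hℓ : ∀ k, ⟪ℓ, x (g k)⟫ = 1)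
    {z : Euc n} (hz : z ∈ K) (hzR : ‖z‖ ≤ R) {η : ℝ} (hη : 0 ≤ η) (hzη : 1 + η ≤ ⟪ℓ, z⟫)
    {p : Euc n} (hpC : p ∈ deepCone v g ε) (hp1 : ⟪ℓ, p⟫ ≤ 1) :
    (1 + ε / (4 * T * (4 * (n : ℝ) ^ 2) ^ 2 * R) * η) • p ∈ K := by
  have hn' : (1 : ℝ) ≤ n := by exact_mod_cast hn
  obtain ⟨b, hb, hbM⟩ := exists_node_coords hn hv hτ hr hx hg p
  obtain ⟨a, ha, haM⟩ := exists_node_coords hn hv hτ hr hx hg z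
  have hbk := coord_ge_of_mem_deepCone hv hτ hT hrε hx hg hε hb hbM hpC
  have hM : 0 < 4 * (n : ℝ) ^ 2 := by positivity
  set M := 4 * (n : ℝ) ^ 2
  have hℓp : ⟪ℓ, p⟫ = ∑ k, b k := by
    rw [hb]; simp [inner_sum, real_inner_smul_right, hℓ]
  have hℓz : ⟪ℓ, z⟫ = ∑ k, a k := by
    rw [ha]; simp [inner_sum, real_inner_smul_right, hℓ]
  have hb0 : ∀ k, 0 ≤ b k := fun k => le_trans (by positivity) (hbk k)
  set P := ⟪ℓ, p⟫
  have hP0 : 0 ≤ P := by rw [hℓp]; exact Finset.sum_nonneg fun k _ => hb0 k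
  have hPM : P ≤ M * ‖p‖ := by
    rw [hℓp]
    exact (Finset.sum_le_sum fun k _ => le_abs_self (b k)).trans hbM
  set s₀ := ε / (4 * T * M ^ 2 * R) with hs₀
  have hs₀0 : 0 ≤ s₀ := by positivity
  have hs : ∀ k, s₀ * P * a k ≤ b k := by
    intro k
    have h1 : a k ≤ M * R := by
      refine (le_abs_self _).trans ((Finset.single_le_sum (f := fun k => |a k|)
        (fun i _ => abs_nonneg _) (Finset.mem_univ k)).trans (haM.trans ?_))
      exact mul_le_mul_of_nonneg_left hzR hM.le
    calc s₀ * P * a k ≤ s₀ * P * (M * R) := by gcongr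
      _ ≤ s₀ * (M * ‖p‖) * (M * R) := by gcongr
      _ = ε / (4 * T) * ‖p‖ := by rw [hs₀]; field_simp
      _ ≤ b k := hbk k
  have ht0 : 0 ≤ s₀ * η := by positivity
  let w : Option (Fin n) → ℝ := fun o =>
    o.elim ((1 + s₀ * η) * (s₀ * P)) fun k => (1 + s₀ * η) * (b k - s₀ * P * a k)
  let y : Option (Fin n) → Euc n := fun o => o.elim z fun k => x (g k)
  have hmem : ∑ o ∈ Finset.univ, w o • y o ∈ K := by
    refine sum_smul_mem_of_sum_le_one hK h0 ?_ ?_ ?_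
    · rintro (_ | k) _
      · simp only [w, Option.elim]; positivity
      · simp only [w, Option.elim]
        exact mul_nonneg (by linarith) (by linarith [hs k])
    · rw [Fintype.sum_option]
      simp only [w, Option.elim]
      rw [← Finset.mul_sum, Finset.sum_sub_distrib, ← Finset.mul_sum, ← hℓp, ← hℓz]
      have h1 : s₀ * P * (1 + η) ≤ s₀ * P * ⟪ℓ, z⟫ :=
        mul_le_mul_of_nonneg_left hzη (by positivity)
      have h2 : (1 + s₀ * η) * (s₀ * P) + (1 + s₀ * η) * (P - s₀ * P * ⟪ℓ, z⟫) ≤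
          (1 + s₀ * η) * (P * (1 - s₀ * η)) := by
        rw [← mul_add]
        refine mul_le_mul_of_nonneg_left ?_ (by linarith)
        linarith
      have h3 : (1 + s₀ * η) * (P * (1 - s₀ * η)) = P - P * (s₀ * η) ^ 2 := by ring
      have h4 : 0 ≤ P * (s₀ * η) ^ 2 := by positivity
      linarith
    · rintro (_ | k) _
      · exact hz
      · exact hxK _ (hg.card_pos k) (hg.card_le k)
  have e : ∑ o ∈ Finset.univ, w o • y o = (1 + s₀ * η) • p := by
    rw [Fintype.sum_option]
    simp only [w, y, Option.elim, mul_smul, sub_smul, smul_sub, Finset.sum_sub_distrib,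
      ← Finset.smul_sum]
    rw [← ha, ← hb]
    abel
  rwa [e] at hmem

/-- If `K` contains the nodes `x s` and a point beyond the hyperplane through the nodes of some
flag by `η`, then the volume of `K` exceeds that of the flag polytope by a fixed multiple of
`η`. -/
theorem volume_gain (hn : 0 < n) (hv : IsRegularSimplex v) {T R : ℝ} (hT : 1 ≤ T) (hR : 1 ≤ R) :
    ∃ r₀ > 0, r₀ ≤ 1 / (4 * (n : ℝ) ^ 2) ∧ ∃ κ > 0, ∀ (τ : Finset (Fin (n + 1)) → ℝ) (r : ℝ)
      (x : Finset (Fin (n + 1)) → Euc n) (K : Set (Euc n)) (g : Fin n → Finset (Fin (n + 1)))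
      (ℓ z : Euc n) (η : ℝ),
      BoundedScaling n T τ → r ≤ r₀ → NearNodes v τ r x → Convex ℝ K → (0 : Euc n) ∈ K →
      (∀ y ∈ K, ‖y‖ ≤ R) →
      (∀ s : Finset (Fin (n + 1)), 0 < s.card → s.card ≤ n → x s ∈ K) →
      IsFlag g → (∀ k, ⟪ℓ, x (g k)⟫ = 1) → z ∈ K → 0 ≤ η → 1 + η ≤ ⟪ℓ, z⟫ →
      (volume K).toReal ≥ (volume (flagPolytope x)).toReal + κ * η := by
  have hn' : (1 : ℝ) ≤ n := by exact_mod_cast hn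
  set M := 4 * (n : ℝ) ^ 2 with hM
  have hM0 : 0 < M := by positivity
  set ε := 1 / (4 * n * (n * T + 1)) with hε
  have hε0 : 0 < ε := by positivity
  have hε1 : ε ≤ 1 := by
    rw [hε, div_le_one (by positivity)]
    nlinarith [mul_le_mul hn' hT zero_le_one (by linarith : (0:ℝ) ≤ n)]
  set ρ := 1 / (M * (n * T + 1)) with hρ
  have hρ0 : 0 < ρ := by positivity
  set s₀ := ε / (4 * T * M ^ 2 * R) with hs₀
  have hs₀0 : 0 < s₀ := by positivity
  set V := (volume (ball (0 : Euc n) (ρ * (1 / (4 * n))))).toReal with hV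
  have hV0 : 0 < V := ENNReal.toReal_pos (measure_ball_pos _ _ (by positivity)).ne'
    measure_ball_lt_top.ne
  refine ⟨ε / (4 * M), by positivity, ?_, s₀ * V, by positivity, ?_⟩
  · rw [div_le_div_iff₀ (by positivity) (by positivity)]
    nlinarith
  intro τ r x K g ℓ z η hτ hr hx hK h0 hKR hxK hg hℓ hz hη hzη
  have hr1 : r ≤ 1 / M := hr.trans (by
    rw [div_le_div_iff₀ (by positivity) (by positivity)]
    nlinarith)
  have hrε : 2 * r * M ≤ ε / 2 := by
    rw [le_div_iff₀ (by positivity)] at hr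
    linarith
  have hKfin : volume K ≠ ⊤ := by
    refine ne_top_of_le_ne_top (measure_closedBall_lt_top (x := (0 : Euc n)) (r := R)).ne
      (measure_mono fun y hy => ?_)
    simpa using hKR y hy
  set C := deepCone v g ε with hC
  have hCm : MeasurableSet C := measurableSet_deepCone g ε
  set A := C ∩ {p | ⟪ℓ, p⟫ ≤ 1} with hA
  set t := s₀ * η with ht
  have ht0 : 0 ≤ t := by positivity
  have hAK : (1 + t) • A ⊆ K ∩ C := by
    rintro _ ⟨p, ⟨hpC, hp1⟩, rfl⟩
    exact ⟨dilate_mem hn hv hT hR hτ hε0 hr1 hrε hx hK h0 hxK hg hℓ hz (hKR z hz) hη hzη hpC hp1,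
      smul_mem_deepCone hpC (by linarith)⟩
  have hPK : flagPolytope x ⊆ K := flagPolytope_subset hK h0 hxK
  have hPA : flagPolytope x ∩ C ⊆ A := fun p hp =>
    ⟨hp.2, inner_le_one_of_mem hn hv hτ hr1 hrε hx hg hℓ hp.1 hp.2⟩
  -- A fixed ball around a point of the central ray of the flag lies in `A`.
  have hVA : ENNReal.ofReal V ≤ volume A := by
    obtain ⟨q, hq⟩ := exists_ball_subset_deepCone hn hv hT hτ hg
    have hsub : ball (ρ • q) (ρ * (1 / (4 * n))) ⊆ A := by
      intro p hp
      have h1 : ‖ρ⁻¹ • p - q‖ < 1 / (4 * n) := by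
        have e : ρ⁻¹ • p - q = ρ⁻¹ • (p - ρ • q) := by
          rw [smul_sub, inv_smul_smul₀ hρ0.ne']
        rw [mem_ball_iff_norm] at hp
        rw [e, norm_smul, Real.norm_eq_abs, abs_of_pos (by positivity), inv_mul_lt_iff₀ hρ0]
        exact hp
      obtain ⟨h2, h3⟩ := hq _ h1
      have h4 := smul_mem_deepCone h2 hρ0
      rw [smul_inv_smul₀ hρ0.ne'] at h4
      refine ⟨h4, ?_⟩
      obtain ⟨b, hb, hbM⟩ := exists_node_coords hn hv hτ hr1 hx hg p
      have h5 : ⟪ℓ, p⟫ = ∑ k, b k := by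
        rw [hb]; simp [inner_sum, real_inner_smul_right, hℓ]
      have h6 : ‖p‖ ≤ ρ * (n * T + 1) := by
        rw [norm_smul, Real.norm_eq_abs, abs_of_pos (by positivity), inv_mul_le_iff₀ hρ0] at h3
        exact h3
      show ⟪ℓ, p⟫ ≤ 1
      calc ⟪ℓ, p⟫ ≤ ∑ k, |b k| := by
            rw [h5]; exact Finset.sum_le_sum fun k _ => le_abs_self (b k)
        _ ≤ M * ‖p‖ := hbM
        _ ≤ M * (ρ * (n * T + 1)) := by gcongr
        _ = 1 := by rw [hρ]; field_simp
    calc ENNReal.ofReal V = volume (ball (0 : Euc n) (ρ * (1 / (4 * n)))) :=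
          ENNReal.ofReal_toReal measure_ball_lt_top.ne
      _ = volume (ball (ρ • q) (ρ * (1 / (4 * n)))) := (Measure.addHaar_ball_center _ _ _).symm
      _ ≤ volume A := measure_mono hsub
  have hAfin : volume A ≠ ⊤ := by
    refine ne_top_of_le_ne_top hKfin (measure_mono fun p hp => ?_)
    have h1 := (hAK (Set.smul_mem_smul_set hp)).1
    have h2 := hK.smul_mem_of_zero_mem h0 h1 (t := (1 + t)⁻¹)
      ⟨by positivity, inv_le_one_of_one_le₀ (by linarith)⟩
    rwa [inv_smul_smul₀ (by positivity)] at h2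
  have hK1 : (1 + t) * volume.real A ≤ volume.real (K ∩ C) := by
    have h1 : volume ((1 + t) • A) = ENNReal.ofReal ((1 + t) ^ n) * volume A := by
      rw [Measure.addHaar_smul_of_nonneg _ (by linarith)]
      simp
    have h2 := measureReal_mono hAK (ne_top_of_le_ne_top hKfin (measure_mono inter_subset_left))
    rw [Measure.real, h1, ENNReal.toReal_mul, ENNReal.toReal_ofReal (by positivity)] at h2
    refine le_trans ?_ h2
    exact mul_le_mul_of_nonneg_right (le_self_pow₀ (by linarith) hn.ne') ENNReal.toReal_nonneg
  have hK2 : volume.real (K ∩ C) + volume.real (K \ C) = volume.real K :=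
    measureReal_inter_add_sdiff hCm hKfin
  have hP2 : volume.real (flagPolytope x ∩ C) + volume.real (flagPolytope x \ C) =
      volume.real (flagPolytope x) :=
    measureReal_inter_add_sdiff hCm (ne_top_of_le_ne_top hKfin (measure_mono hPK))
  have hP3 : volume.real (flagPolytope x ∩ C) ≤ volume.real A := measureReal_mono hPA hAfin
  have hP4 : volume.real (flagPolytope x \ C) ≤ volume.real (K \ C) :=
    measureReal_mono (sdiff_subset_sdiff_left hPK)
      (ne_top_of_le_ne_top hKfin (measure_mono sdiff_subset))
  have hVA' : V ≤ volume.real A := (ENNReal.ofReal_le_iff_le_toReal hAfin).1 hVA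
  have h5 : t * V ≤ t * volume.real A := mul_le_mul_of_nonneg_left hVA' ht0
  have h6 : s₀ * V * η = t * V := by rw [ht]; ring
  change volume.real K ≥ volume.real (flagPolytope x) + s₀ * V * η
  rw [h6]
  linarith

end Gain

/-! ### Convex bodies near the simplex and their polars -/

section Body

variable {n : ℕ} {v : Fin (n + 1) → Euc n}

theorem mem_polarAt_zero {K : Set (Euc n)} {y : Euc n} :
    y ∈ polarAt K 0 ↔ ∀ x ∈ K, ⟪y, x⟫ ≤ 1 := by simp [polarAt]

theorem convex_polarAt_zero (K : Set (Euc n)) : Convex ℝ (polarAt K 0) := by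
  intro y hy z hz a b ha hb hab
  rw [mem_polarAt_zero] at hy hz ⊢
  intro x hx
  rw [inner_add_left, real_inner_smul_left, real_inner_smul_left]
  nlinarith [hy x hx, hz x hx]

theorem isClosed_polarAt_zero (K : Set (Euc n)) : IsClosed (polarAt K 0) := by
  have : polarAt K 0 = ⋂ x ∈ K, {y | ⟪y, x⟫ ≤ 1} := by
    ext y; simp [mem_polarAt_zero]
  rw [this]
  exact isClosed_biInter fun x _ => isClosed_le (by fun_prop) continuous_const

theorem vertex_mem_simplexHull (i : Fin (n + 1)) : v i ∈ simplexHull v :=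
  subset_convexHull ℝ _ (Set.mem_range_self i)

theorem centroidOf_mem_simplexHull {s : Finset (Fin (n + 1))} (hs : 0 < s.card) :
    centroidOf v s ∈ simplexHull v := by
  have h := (convex_convexHull ℝ (Set.range v)).centerMass_mem (t := s) (w := fun _ => (1 : ℝ))
    (z := v) (fun _ _ => zero_le_one) (by simpa using hs) (fun i _ => vertex_mem_simplexHull i)
  simpa [Finset.centerMass, centroidOf, simplexHull] using h

theorem zero_mem_simplexHull (hn : 0 < n) (hv : IsRegularSimplex v) :
    (0 : Euc n) ∈ simplexHull v := by
  have h := centroidOf_mem_simplexHull (v := v) (s := Finset.univ) (by simp)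
  rwa [centroidOf, sum_vertex_eq_zero hn hv, smul_zero] at h

theorem inner_vertex_ge_of_mem (hv : IsRegularSimplex v) {x : Euc n} (hx : x ∈ simplexHull v)
    (j : Fin (n + 1)) : -(1 / (n : ℝ)) ≤ ⟪x, v j⟫ := by
  have hc : Convex ℝ {x : Euc n | -(1 / (n : ℝ)) ≤ ⟪x, v j⟫} := by
    intro y hy z hz a b ha hb hab
    simp only [mem_ofPred_eq, inner_add_left, real_inner_smul_left] at *
    have h1 := mul_le_mul_of_nonneg_left hy ha
    have h2 := mul_le_mul_of_nonneg_left hz hb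
    have e : a * -(1 / (n : ℝ)) + b * -(1 / (n : ℝ)) = -(1 / (n : ℝ)) := by
      rw [← add_mul, hab, one_mul]
    linarith
  refine convexHull_min ?_ hc hx
  rintro _ ⟨i, rfl⟩
  rw [mem_ofPred_eq, inner_vertex hv]
  split_ifs
  · have : 0 ≤ 1 / (n : ℝ) := by positivity
    linarith
  · linarith

theorem norm_le_one_of_mem (hv : IsRegularSimplex v) {x : Euc n} (hx : x ∈ simplexHull v) :
    ‖x‖ ≤ 1 := by
  have h := convexHull_min (s := Set.range v) (t := closedBall (0 : Euc n) 1) ?_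
    (convex_closedBall _ _) hx
  · simpa using h
  · rintro _ ⟨i, rfl⟩
    simp [hv.1]

theorem centroidOf_compl_singleton (hn : 0 < n) (hv : IsRegularSimplex v) (j : Fin (n + 1)) :
    centroidOf v {j}ᶜ = -(1 / (n : ℝ)) • v j := by
  have h := sum_vertex_eq_zero hn hv
  rw [← Finset.sum_compl_add_sum {j}, Finset.sum_singleton] at h
  rw [centroidOf, eq_neg_of_add_eq_zero_left h, Finset.card_compl]
  simp

theorem dualCentroid_compl_singleton (hn : 0 < n) (hv : IsRegularSimplex v) (j : Fin (n + 1)) :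
    dualCentroid v {j}ᶜ = -(n : ℝ) • v j := by
  have hn' : (n : ℝ) ≠ 0 := by positivity
  rw [dualCentroid, centroidOf_compl_singleton hn hv, norm_smul, hv.1, smul_smul]
  congr 1
  simp only [norm_neg, Real.norm_eq_abs, mul_one, sq_abs]
  field_simp

theorem neg_smul_vertex_mem_polar {K : Set (Euc n)} (hn : 0 < n) (hv : IsRegularSimplex v)
    (hK : K ⊆ simplexHull v) (j : Fin (n + 1)) : -(n : ℝ) • v j ∈ polarAt K 0 := by
  rw [mem_polarAt_zero]
  intro x hx
  have h := inner_vertex_ge_of_mem hv (hK hx) j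
  have hn' : (0 : ℝ) < n := by positivity
  rw [real_inner_smul_left, real_inner_comm]
  have : (n : ℝ) * -(1 / n) ≤ n * ⟪x, v j⟫ := mul_le_mul_of_nonneg_left h hn'.le
  have e : (n : ℝ) * -(1 / n) = -1 := by field_simp
  linarith

theorem dualCentroid_mem_polar {K : Set (Euc n)} (hv : IsRegularSimplex v)
    (hK : K ⊆ simplexHull v) {s : Finset (Fin (n + 1))} (hs : 0 < s.card) (hs2 : s.card ≤ n) :
    dualCentroid v s ∈ polarAt K 0 := by
  rw [mem_polarAt_zero]
  have hcs := norm_centroid_sq hv hs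
  have h1 : (1 : ℝ) ≤ s.card := by exact_mod_cast hs
  have h2 : (s.card : ℝ) ≤ n := by exact_mod_cast hs2
  have hn : (0 : ℝ) < n := by linarith
  have hb := (norm_centroid_bounds hv hs hs2).1
  have hpos : 0 < ‖centroidOf v s‖ ^ 2 := lt_of_lt_of_le (by positivity) hb
  have hc : Convex ℝ {x : Euc n | ⟪dualCentroid v s, x⟫ ≤ 1} := by
    intro y hy z hz a b ha hb hab
    simp only [mem_ofPred_eq, inner_add_right, real_inner_smul_right] at *
    nlinarith
  intro x hx
  refine convexHull_min ?_ hc (hK hx)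
  rintro _ ⟨i, rfl⟩
  rw [mem_ofPred_eq, dualCentroid, real_inner_smul_left, inv_mul_le_iff₀ hpos, mul_one, hcs,
    inner_centroid_vertex hv hs]
  have : 0 ≤ (1 + 1 / (n : ℝ)) / s.card := by positivity
  split_ifs <;> linarith

theorem inner_polar_vertex_le {K : Set (Euc n)} {δ : ℝ} (hδ0 : 0 < δ)
    (hδ : δ ≤ 1 / 2) (hK : (1 - δ) • simplexHull v ⊆ K) {y : Euc n} (hy : y ∈ polarAt K 0)
    (i : Fin (n + 1)) : ⟪y, v i⟫ ≤ 1 + 2 * δ := by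
  have h := mem_polarAt_zero.1 hy _ (hK (Set.smul_mem_smul_set (vertex_mem_simplexHull i)))
  rw [real_inner_smul_right] at h
  by_contra hcon
  nlinarith [not_le.1 hcon]

/-- The only use of the facet centroids: the centroid of the facet opposite to `v j` is `-v j / n`,
and its membership in `K` bounds `⟪y, v j⟫` from below on the polar body. -/
theorem inner_polar_vertex_ge {K : Set (Euc n)} (hn : 0 < n) (hv : IsRegularSimplex v)
    (hc : ∀ s : Finset (Fin (n + 1)), s.card = n → centroidOf v s ∈ K) {y : Euc n}
    (hy : y ∈ polarAt K 0) (j : Fin (n + 1)) : -(n : ℝ) ≤ ⟪y, v j⟫ := by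
  have h := mem_polarAt_zero.1 hy _ (hc {j}ᶜ (by simp [Finset.card_compl]))
  have hn' : (0 : ℝ) < n := by positivity
  rw [centroidOf_compl_singleton hn hv, real_inner_smul_right] at h
  have h2 : (n : ℝ) * (-(1 / n) * ⟪y, v j⟫) ≤ n * 1 := mul_le_mul_of_nonneg_left h hn'.le
  have e : (n : ℝ) * (-(1 / n) * ⟪y, v j⟫) = -⟪y, v j⟫ := by field_simp
  linarith

/-- Maximality of `t` in the tangency condition, tested at the multiple `t' • c` itself. -/
theorem le_of_isTangency {F : Set (Euc n)} {c x : Euc n} {K : Set (Euc n)} {t t' : ℝ}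
    (h : IsTangency F c K t x) (ht' : t' • c ∈ K) : t' ≤ t :=
  h.2.2.2 t' ⟨t' • c, ⟨0, fun y _ => inner_zero_right y, by simp⟩, ht'⟩

theorem inner_of_isTangency {F : Set (Euc n)} {c x : Euc n} {K : Set (Euc n)} {t : ℝ}
    (h : IsTangency F c K t x) {f : Euc n} (hf : f ∈ F) : ⟪x, f⟫ = t * ⟪c, f⟫ := by
  obtain ⟨u, hu, rfl⟩ := h.2.2.1
  have h2 : ⟪u, f⟫ = 0 := by rw [real_inner_comm]; exact hu f hf
  simp [inner_add_left, real_inner_smul_left, h2]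

theorem mem_of_isTangency {F : Set (Euc n)} {c x : Euc n} {K : Set (Euc n)} {t : ℝ}
    (h : IsTangency F c K t x) (hK : IsClosed K) : x ∈ K :=
  hK.frontier_subset h.2.1

/-- The tangency condition fixes `⟪x, v i⟫` up to `O(δ)` for `i ∈ s`, and `K ⊆ Δₙ` bounds it below
for `i ∉ s`. -/
theorem norm_sub_centroid_le {K : Set (Euc n)} {δ : ℝ} (hn : 0 < n) (hv : IsRegularSimplex v)
    (hδ0 : 0 < δ)
    (hcl : IsClosed K) (hK1 : (1 - δ) • simplexHull v ⊆ K) (hK2 : K ⊆ simplexHull v)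
    {s : Finset (Fin (n + 1))} (hs : 0 < s.card) (hs2 : s.card ≤ n) {t : ℝ} {x : Euc n}
    (h : IsTangency (faceOf v s) (centroidOf v s) K t x) :
    ‖x - centroidOf v s‖ ≤ 2 * (n + 1) * δ := by
  rw [← norm_neg]
  refine norm_le_of_inner_vertex_le hn hv fun i => ?_
  have ht : 1 - δ ≤ t :=
    le_of_isTangency h (hK1 (Set.smul_mem_smul_set (centroidOf_mem_simplexHull hs)))
  rw [inner_neg_left, inner_sub_left]
  by_cases hi : i ∈ s
  · have h1 := inner_of_isTangency h
      (subset_convexHull ℝ _ (Set.mem_image_of_mem v (Finset.mem_coe.2 hi)))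
    have hb := norm_centroid_bounds hv hs hs2
    have hcs := norm_centroid_sq hv hs
    have h2 := inner_centroid_vertex hv hs i
    rw [if_pos hi, mul_one, ← hcs] at h2
    rw [h1, h2]
    nlinarith [sq_nonneg ‖centroidOf v s‖]
  · have h1 := inner_vertex_ge_of_mem hv (hK2 (mem_of_isTangency h hcl)) i
    have h2 := inner_centroid_vertex hv hs i
    rw [if_neg hi] at h2
    rw [h2]
    linarith

/-- The roles of the two cases are exchanged in comparison with `norm_sub_centroid_le`: the tangency
condition fixes `⟪x, v i⟫` for `i ∉ s`, as `-n • v i` is a vertex of the dual face. -/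
theorem norm_sub_dualCentroid_le {K : Set (Euc n)} {δ : ℝ} (hn : 0 < n) (hv : IsRegularSimplex v)
    (hδ0 : 0 < δ) (hδ : δ ≤ 1 / 2)
    (hK1 : (1 - δ) • simplexHull v ⊆ K) (hK2 : K ⊆ simplexHull v)
    {s : Finset (Fin (n + 1))} (hs : 0 < s.card) (hs2 : s.card ≤ n) {t : ℝ} {x : Euc n}
    (h : IsTangency (dualFace v s) (dualCentroid v s) (polarAt K 0) t x) :
    ‖x - dualCentroid v s‖ ≤ 4 * (n + 1) * δ := by
  have hn' : (0 : ℝ) < n := by positivity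
  have key : ∀ i, ⟪x - dualCentroid v s, v i⟫ ≤ 2 * δ := by
    intro i
    have ht : 1 ≤ t :=
      le_of_isTangency h (by rw [one_smul]; exact dualCentroid_mem_polar hv hK2 hs hs2)
    have hb := (norm_centroid_bounds hv hs hs2).1
    have hpos : 0 < ‖centroidOf v s‖ ^ 2 := lt_of_lt_of_le (by positivity) hb
    have hcs := norm_centroid_sq hv hs
    have h2 := inner_centroid_vertex hv hs i
    rw [inner_sub_left]
    by_cases hi : i ∈ s
    · rw [if_pos hi, mul_one, ← hcs] at h2
      have h3 := inner_polar_vertex_le hδ0 hδ hK1 (mem_of_isTangency h (isClosed_polarAt_zero K)) i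
      rw [dualCentroid, real_inner_smul_left, h2, inv_mul_cancel₀ hpos.ne']
      linarith
    · have hmem : -(n : ℝ) • v i ∈ dualFace v s := by
        refine ⟨neg_smul_vertex_mem_polar hn hv subset_rfl i, fun f hf => ?_⟩
        have hc : Convex ℝ {x : Euc n | ⟪x, -(n : ℝ) • v i⟫ = 1} := by
          intro y hy z hz a b ha hb hab
          simp only [mem_ofPred_eq, inner_add_left, real_inner_smul_left] at *
          rw [hy, hz]; linarith
        refine convexHull_min ?_ hc hf
        rintro _ ⟨j, hj, rfl⟩
        have hji : j ≠ i := fun e => hi (e ▸ hj)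
        rw [mem_ofPred_eq, real_inner_smul_right, hv.2 j i hji]
        field_simp
      have h1 := inner_of_isTangency h hmem
      rw [real_inner_smul_right, real_inner_smul_right] at h1
      have h4 : ⟪x, v i⟫ = t * ⟪dualCentroid v s, v i⟫ := by
        have : (n : ℝ) * ⟪x, v i⟫ = n * (t * ⟪dualCentroid v s, v i⟫) := by linarith
        exact mul_left_cancel₀ hn'.ne' this
      rw [if_neg hi, mul_zero, zero_sub] at h2
      have h5 : ⟪dualCentroid v s, v i⟫ ≤ 0 := by
        rw [dualCentroid, real_inner_smul_left, h2]
        exact mul_nonpos_of_nonneg_of_nonpos (by positivity) (by simp)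
      rw [h4]
      nlinarith
  have := norm_le_of_inner_vertex_le hn hv key
  linarith

/-- Minimality of `δ` produces a vertex `v i` with `(1 - δ / 2) • v i ∉ K`; a hyperplane separating
this point from `K` is recorded as a point of the polar body. -/
theorem exists_polar_point {K : Set (Euc n)} {δ : ℝ} (hδ0 : 0 < δ) (hδ : δ ≤ 1 / 2)
    (hcl : IsClosed K) (hconv : Convex ℝ K) (h0 : (0 : Euc n) ∈ K)
    (hl : IsLeast {d : ℝ | 0 < d ∧ (1 - d) • simplexHull v ⊆ K ∧ K ⊆ simplexHull v} δ) :
    ∃ i, ∃ y ∈ polarAt K 0, 1 + δ / 2 < ⟪y, v i⟫ := by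
  have h1 : ∃ i, (1 - δ / 2) • v i ∉ K := by
    by_contra! hcon
    have : δ ≤ δ / 2 := hl.2 ⟨by linarith, ?_, hl.1.2.2⟩
    · linarith
    · rw [simplexHull, ← convexHull_smul]
      refine convexHull_min ?_ hconv
      rintro _ ⟨_, ⟨i, rfl⟩, rfl⟩
      exact hcon i
  obtain ⟨i, hi⟩ := h1
  obtain ⟨f, u, hu, hui⟩ := geometric_hahn_banach_closed_point hconv hcl hi
  have hu0 : 0 < u := by simpa using hu 0 h0
  have hf : ∀ x, ⟪(InnerProductSpace.toDual ℝ (Euc n)).symm f, x⟫ = f x := fun x =>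
    InnerProductSpace.toDual_symm_apply
  refine ⟨i, u⁻¹ • (InnerProductSpace.toDual ℝ (Euc n)).symm f, ?_, ?_⟩
  · rw [mem_polarAt_zero]
    intro x hx
    rw [real_inner_smul_left, hf, inv_mul_le_iff₀ hu0, mul_one]
    exact (hu x hx).le
  · rw [real_inner_smul_left, hf, lt_inv_mul_iff₀ hu0]
    rw [map_smul, smul_eq_mul] at hui
    by_contra hcon
    have h3 := not_lt.1 hcon
    have h4 : (1 - δ / 2) * f (v i) ≤ (1 - δ / 2) * (u * (1 + δ / 2)) :=
      mul_le_mul_of_nonneg_left h3 (by linarith)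
    have h5 : (1 - δ / 2) * (u * (1 + δ / 2)) = u - u * (δ / 2) ^ 2 := by ring
    have h6 : 0 ≤ u * (δ / 2) ^ 2 := by positivity
    linarith

/-- If `v i` is cut off from `K`, every `x ∈ K` stays away from some facet through `v i`. By the
tight frame identity, the gap `⟪y, v i⟫ - ⟪x, y⟫` is a combination, with coefficients bounded by
`inner_polar_vertex_le` and `inner_polar_vertex_ge`, of the distances of `x` to these facets. -/
theorem exists_far_facet {K : Set (Euc n)} {δ : ℝ} (hn : 0 < n) (hv : IsRegularSimplex v)
    (hδ0 : 0 < δ) (hδ : δ ≤ 1 / 2)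
    (hK1 : (1 - δ) • simplexHull v ⊆ K) (hK2 : K ⊆ simplexHull v)
    (hc : ∀ s : Finset (Fin (n + 1)), s.card = n → centroidOf v s ∈ K)
    {i : Fin (n + 1)} {y : Euc n} (hy : y ∈ polarAt K 0) (hyi : 1 + δ / 2 < ⟪y, v i⟫)
    {x : Euc n} (hx : x ∈ K) : ∃ j, i ≠ j ∧ δ / (4 * n) ≤ 1 + n * ⟪x, v j⟫ := by
  by_contra! hcon
  have hn' : (0 : ℝ) < n := by positivity
  have h1 : (n + 1) * (⟪y, v i⟫ - ⟪x, y⟫) =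
      ∑ k, (1 + n * ⟪x, v k⟫) * (⟪y, v i⟫ - ⟪y, v k⟫) := by
    have e1 := sum_inner_vertex_eq_zero hn hv x
    have e2 := sum_inner_vertex_eq_zero hn hv y
    have e3 := sum_inner_mul_inner hn hv x y
    have e4 : ∑ k, (1 + n * ⟪x, v k⟫) * (⟪y, v i⟫ - ⟪y, v k⟫) =
        ∑ _k : Fin (n + 1), ⟪y, v i⟫ + n * ⟪y, v i⟫ * ∑ k, ⟪x, v k⟫ - ∑ k, ⟪y, v k⟫ -
          n * ∑ k, ⟪x, v k⟫ * ⟪y, v k⟫ := by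
      rw [Finset.mul_sum, Finset.mul_sum, ← Finset.sum_add_distrib, ← Finset.sum_sub_distrib,
        ← Finset.sum_sub_distrib]
      exact Finset.sum_congr rfl fun k _ => by ring
    rw [e4, e1, e2, e3]
    simp
    field_simp
  have h2 : ∑ k, (1 + n * ⟪x, v k⟫) * (⟪y, v i⟫ - ⟪y, v k⟫) ≤
      ∑ k, (if k = i then 0 else δ / (4 * n) * (2 * (n + 1))) := by
    refine Finset.sum_le_sum fun k _ => ?_
    split_ifs with hk
    · subst hk; simp
    · have h3 := hcon k (Ne.symm hk)
      have h4 : 0 ≤ 1 + n * ⟪x, v k⟫ := by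
        have := mul_le_mul_of_nonneg_left (inner_vertex_ge_of_mem hv (hK2 hx) k) hn'.le
        have e : (n : ℝ) * -(1 / n) = -1 := by field_simp
        linarith
      have h5 := inner_polar_vertex_le hδ0 hδ hK1 hy i
      have h6 := inner_polar_vertex_ge hn hv hc hy k
      calc _ ≤ (1 + n * ⟪x, v k⟫) * (2 * (n + 1)) :=
            mul_le_mul_of_nonneg_left (by linarith) h4
        _ ≤ _ := mul_le_mul_of_nonneg_right h3.le (by positivity)
  have h3 : ∑ k : Fin (n + 1), (if k = i then 0 else δ / (4 * n) * (2 * (n + 1))) =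
      (n + 1) * (δ / 2) := by
    rw [← Finset.add_sum_erase _ _ (Finset.mem_univ i), if_pos rfl,
      Finset.sum_congr rfl (fun k hk => if_neg (Finset.ne_of_mem_erase hk))]
    simp
    field_simp
    norm_num
  have h4 := mem_polarAt_zero.1 hy x hx
  rw [real_inner_comm] at h4
  have h5 : (n + 1) * (δ / 2) < (n + 1) * (⟪y, v i⟫ - ⟪x, y⟫) :=
    mul_lt_mul_of_pos_left (by linarith) (by positivity)
  linarith

end Body

/-! ### The duality argument -/

section Duality

variable {n : ℕ} {v : Fin (n + 1) → Euc n}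

theorem IsFlag.exists_eq_singleton {g : Fin n → Finset (Fin (n + 1))} (hn : 0 < n)
    (hg : IsFlag g) {i : Fin (n + 1)} (hi : ∀ k, i ∈ g k) : ∃ k, g k = {i} := by
  refine ⟨⟨0, hn⟩, ?_⟩
  obtain ⟨a, ha⟩ := Finset.card_eq_one.1 (hg.1 ⟨0, hn⟩)
  have h := hi ⟨0, hn⟩
  rw [ha, Finset.mem_singleton] at h
  rw [ha, h]

theorem IsFlag.exists_eq_compl {g : Fin n → Finset (Fin (n + 1))} (hn : 0 < n)
    (hg : IsFlag g) {j : Fin (n + 1)} (hj : ∀ k, j ∉ g k) : ∃ k, g k = {j}ᶜ := by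
  refine ⟨⟨n - 1, by omega⟩, Finset.eq_of_subset_of_card_le (fun a ha => ?_) ?_⟩
  · rw [Finset.mem_compl, Finset.mem_singleton]
    rintro rfl
    exact hj _ ha
  · rw [hg.1, Finset.card_compl]
    simp
    omega

/-- There is a flag from `v i` to the facet opposite to `v j` whose perturbed primal nodes span a
hyperplane with normal near `-n • v j`, the normal of that facet. -/
theorem exists_primal_normal (hn : 0 < n) (hv : IsRegularSimplex v) {T r : ℝ}
    (hτ : BoundedScaling n T fun _ => 1) (hr : r ≤ 1 / (4 * (n : ℝ) ^ 2))
    {x : Finset (Fin (n + 1)) → Euc n} (hx : NearNodes v (fun _ => 1) r x)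
    {i j : Fin (n + 1)} (hij : i ≠ j) :
    ∃ g : Fin n → Finset (Fin (n + 1)), IsFlag g ∧ ∃ ℓ : Euc n, (∀ k, ⟪ℓ, x (g k)⟫ = 1) ∧
      ⟪ℓ, x {i}⟫ = 1 ∧ ‖ℓ - -(n : ℝ) • v j‖ ≤ 4 * (n : ℝ) ^ 3 * r := by
  obtain ⟨g, hg, hgij⟩ := exists_flag hn hij
  have hn' : (0 : ℝ) < n := by positivity
  obtain ⟨ℓ, h1, h2⟩ := exists_normal hn hv hτ hr hx hg (ℓ₀ := -(n : ℝ) • v j) (fun k => by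
    rw [one_smul, real_inner_smul_left, real_inner_comm, inner_centroid_vertex hv (hg.card_pos k),
      if_neg (hgij k).2]
    field_simp
    ring)
  obtain ⟨k, hk⟩ := hg.exists_eq_singleton hn fun k => (hgij k).1
  refine ⟨g, hg, ℓ, h1, hk ▸ h1 k, h2.trans_eq ?_⟩
  rw [norm_smul, hv.1, norm_neg, Real.norm_of_nonneg hn'.le]
  ring

/-- The perturbed dual nodes of the same flag span a hyperplane with normal near `v i`, because
the unperturbed ones lie in the facet of `Δₙ°` dual to `v i`. -/
theorem exists_dual_normal (hn : 0 < n) (hv : IsRegularSimplex v) {T r : ℝ}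
    (hτ : BoundedScaling n T fun s => (‖centroidOf v s‖ ^ 2)⁻¹)
    (hr : r ≤ 1 / (4 * (n : ℝ) ^ 2)) {x : Finset (Fin (n + 1)) → Euc n}
    (hx : NearNodes v (fun s => (‖centroidOf v s‖ ^ 2)⁻¹) r x) {i j : Fin (n + 1)} (hij : i ≠ j) :
    ∃ g : Fin n → Finset (Fin (n + 1)), IsFlag g ∧ ∃ ℓ : Euc n, (∀ k, ⟪ℓ, x (g k)⟫ = 1) ∧
      ⟪ℓ, x {j}ᶜ⟫ = 1 ∧ ‖ℓ - v i‖ ≤ 4 * (n : ℝ) ^ 2 * r := by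
  obtain ⟨g, hg, hgij⟩ := exists_flag hn hij
  have hn' : (0 : ℝ) < n := by positivity
  obtain ⟨ℓ, h1, h2⟩ := exists_normal hn hv hτ hr hx hg (ℓ₀ := v i) (fun k => by
    have hb := (norm_centroid_bounds hv (hg.card_pos k) (hg.card_le k)).1
    have hpos : 0 < ‖centroidOf v (g k)‖ ^ 2 := lt_of_lt_of_le (by positivity) hb
    have h := inner_centroid_vertex hv (hg.card_pos k) i
    rw [if_pos (hgij k).1, mul_one, ← norm_centroid_sq hv (hg.card_pos k)] at h
    rw [real_inner_smul_right, real_inner_comm, h, inv_mul_cancel₀ hpos.ne'])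
  obtain ⟨k, hk⟩ := hg.exists_eq_compl hn fun k => (hgij k).2
  refine ⟨g, hg, ℓ, h1, hk ▸ h1 k, h2.trans_eq ?_⟩
  rw [hv.1]
  ring

/-- The quantitative duality argument. Assume that every primal and dual supporting functional of
the inner polytopes exceeds `1` by at most `η` on `K` and on `K°`. Rescaling a primal functional
puts it into `K°`, where the dual functionals control it to second order in `ρ`; hence the node
`p i` near `v i` is at distance `O(η + ρ²)` from the facet opposite to `v j`. -/
theorem facet_gap_le {K : Set (Euc n)} (hn : 0 < n) (hv : IsRegularSimplex v) {ρ η : ℝ}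
    (hη : 0 ≤ η) (hρ : ρ ≤ 1) (hηρ : (n + 1) * η ≤ ρ)
    (hU : (n + 1) * η + (n + 3) * ρ ^ 2 ≤ 1) {p w : Fin (n + 1) → Euc n}
    (hp : ∀ i, ‖p i - v i‖ ≤ ρ) (hw : ∀ j, ‖w j - -(n : ℝ) • v j‖ ≤ ρ)
    (hwK : ∀ j, w j ∈ polarAt K 0) (hvK : ∀ j, -(n : ℝ) • v j ∈ polarAt K 0)
    (hge : ∀ y ∈ polarAt K 0, ∀ j, -(n : ℝ) ≤ ⟪y, v j⟫)
    (hA : ∀ i j, i ≠ j → ∃ ℓ : Euc n, ⟪ℓ, p i⟫ = 1 ∧ ‖ℓ - -(n : ℝ) • v j‖ ≤ ρ ∧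
      ∀ z ∈ K, ⟪ℓ, z⟫ ≤ 1 + η)
    (hB : ∀ i j, i ≠ j → ∃ ℓ : Euc n, ⟪ℓ, w j⟫ = 1 ∧ ‖ℓ - v i‖ ≤ ρ ∧
      ∀ z ∈ polarAt K 0, ⟪ℓ, z⟫ ≤ 1 + η) {i j : Fin (n + 1)} (hij : i ≠ j) :
    1 + n * ⟪p i, v j⟫ ≤ (n + 3) * η + (n + 4) * ρ ^ 2 := by
  have hn' : (0 : ℝ) < n := by positivity
  have hρ0 : 0 ≤ ρ := (norm_nonneg _).trans (hp i)
  have hD : ∀ a, a ≠ j → ∀ z ∈ polarAt K 0, ∀ B, ‖z - w j‖ ≤ B → ⟪v a, z - w j⟫ ≤ η + ρ * B := by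
    intro a ha z hz B hzB
    obtain ⟨m, hm1, hm2, hm3⟩ := hB a j ha
    have h1 := inner_le_norm_bound hm2 hzB
    have h2 := hm3 z hz
    have e : ⟪v a, z - w j⟫ = ⟪m, z⟫ - ⟪m, w j⟫ - ⟪m - v a, z - w j⟫ := by
      simp only [inner_sub_left, inner_sub_right]; ring
    have := neg_abs_le ⟪m - v a, z - w j⟫
    rw [e, hm1]
    linarith
  -- The inner products of `-n • v j - w j` with the vertices sum to zero, so upper bounds on all
  -- but one of them give a lower bound on the remaining one.
  have hwi : ⟪v i, w j⟫ ≤ 1 + n * (η + ρ ^ 2) := by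
    have hs := sum_inner_vertex_eq_zero hn hv (-(n : ℝ) • v j - w j)
    rw [← Finset.add_sum_erase _ _ (Finset.mem_univ j), ← Finset.add_sum_erase _ _
      (Finset.mem_erase.2 ⟨hij, Finset.mem_univ i⟩)] at hs
    have h1 : ∑ a ∈ (Finset.univ.erase j).erase i, ⟪-(n : ℝ) • v j - w j, v a⟫ ≤
        ∑ a ∈ (Finset.univ.erase j).erase i, (η + ρ * ρ) :=
      Finset.sum_le_sum fun a ha => by
        rw [real_inner_comm]
        exact hD a (Finset.ne_of_mem_erase (Finset.mem_of_mem_erase ha)) _ (hvK j) ρ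
          (by rw [norm_sub_rev]; exact hw j)
    have h2 : ∑ a ∈ (Finset.univ.erase j).erase i, (η + ρ * ρ) ≤ n * (η + ρ ^ 2) := by
      rw [Finset.sum_const, nsmul_eq_mul, ← pow_two]
      refine mul_le_mul_of_nonneg_right ?_ (by positivity)
      refine Nat.cast_le.2 ((Finset.card_erase_le).trans ?_)
      simp
    have h3 : ⟪-(n : ℝ) • v j - w j, v j⟫ ≤ 0 := by
      have := hge _ (hwK j) j
      rw [inner_sub_left, real_inner_smul_left, real_inner_self_eq_norm_sq, hv.1]
      linarith
    have h4 : ⟪-(n : ℝ) • v j - w j, v i⟫ = 1 - ⟪v i, w j⟫ := by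
      rw [inner_sub_left, real_inner_smul_left, hv.2 j i hij.symm, real_inner_comm]
      field_simp
    linarith
  obtain ⟨ℓ, hl1, hl2, hl3⟩ := hA i j hij
  have hη1 : 0 < 1 + η := by linarith
  have hyK : (1 + η)⁻¹ • ℓ ∈ polarAt K 0 := by
    rw [mem_polarAt_zero]
    intro z hz
    rw [real_inner_smul_left, inv_mul_le_iff₀ hη1, mul_one]
    exact hl3 z hz
  have hln : ‖ℓ‖ ≤ n + 1 := by
    have h1 : ‖-(n : ℝ) • v j‖ = n := by
      rw [norm_smul, hv.1, norm_neg, Real.norm_of_nonneg hn'.le, mul_one]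
    have := norm_le_norm_add_norm_sub' ℓ (-(n : ℝ) • v j)
    linarith
  have hyl : ‖(1 + η)⁻¹ • ℓ - ℓ‖ ≤ ρ := by
    have e : (1 + η)⁻¹ • ℓ - ℓ = (-(η * (1 + η)⁻¹)) • ℓ := by
      nth_rewrite 2 [← one_smul ℝ ℓ]
      rw [← sub_smul]
      congr 1
      field_simp
      ring
    have h1 : η * (1 + η)⁻¹ ≤ η := mul_le_of_le_one_right hη (inv_le_one_of_one_le₀ (by linarith))
    rw [e, norm_smul, norm_neg, Real.norm_of_nonneg (by positivity)]
    calc _ ≤ η * (n + 1) := mul_le_mul h1 hln (norm_nonneg _) hη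
      _ ≤ ρ := by linarith
  have hyw : ‖(1 + η)⁻¹ • ℓ - w j‖ ≤ 3 * ρ := by
    have e : (1 + η)⁻¹ • ℓ - w j =
        ((1 + η)⁻¹ • ℓ - ℓ) + (ℓ - -(n : ℝ) • v j) - (w j - -(n : ℝ) • v j) := by abel
    rw [e]
    have h1 := norm_sub_le (((1 + η)⁻¹ • ℓ - ℓ) + (ℓ - -(n : ℝ) • v j)) (w j - -(n : ℝ) • v j)
    have h2 := norm_add_le ((1 + η)⁻¹ • ℓ - ℓ) (ℓ - -(n : ℝ) • v j)
    linarith [hw j]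
  have hup := hD i hij _ hyK _ hyw
  rw [inner_sub_right, real_inner_smul_right] at hup
  have hup2 : (1 + η)⁻¹ * ⟪v i, ℓ⟫ ≤ 1 + ((n + 1) * η + (n + 3) * ρ ^ 2) := by nlinarith
  rw [inv_mul_le_iff₀ hη1] at hup2
  have hlow : 1 + (1 + n * ⟪p i, v j⟫) - ρ ^ 2 ≤ ⟪v i, ℓ⟫ := by
    have h1 := inner_le_norm_bound (hp i) hl2
    have e : ⟪v i, ℓ⟫ = ⟪ℓ, p i⟫ + (1 + n * ⟪p i, v j⟫) - ⟪p i - v i, ℓ - -(n : ℝ) • v j⟫ := by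
      rw [inner_sub_left, inner_sub_right, inner_sub_right, real_inner_smul_right,
        real_inner_smul_right, hv.2 i j hij, real_inner_comm ℓ (p i)]
      field_simp
      ring
    have := le_abs_self ⟪p i - v i, ℓ - -(n : ℝ) • v j⟫
    rw [e, hl1]
    linarith
  have h5 : η * ((n + 1) * η + (n + 3) * ρ ^ 2) ≤ η * 1 := mul_le_mul_of_nonneg_left hU hη
  linarith

theorem boundedScaling_one (hn : 0 < n) : BoundedScaling n ((n : ℝ) ^ 2) fun _ => 1 := by
  intro s _ _
  have : (1 : ℝ) ≤ n := by exact_mod_cast hn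
  exact ⟨le_rfl, one_le_pow₀ this⟩

theorem boundedScaling_dual (hn : 0 < n) (hv : IsRegularSimplex v) :
    BoundedScaling n ((n : ℝ) ^ 2) fun s => (‖centroidOf v s‖ ^ 2)⁻¹ := by
  intro s hs hs2
  have hn' : (0 : ℝ) < n := by positivity
  obtain ⟨h1, h2⟩ := norm_centroid_bounds hv hs hs2
  have hpos : 0 < ‖centroidOf v s‖ ^ 2 := lt_of_lt_of_le (by positivity) h1
  refine ⟨(one_le_inv₀ hpos).2 h2, inv_le_of_inv_le₀ (by positivity) ?_⟩
  rwa [← one_div]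

end Duality

/-- If `δ = min {d > 0 : (1−d)Δₙ ⊆ K ⊆ Δₙ}` is small enough and all centroids of
facets of `Δₙ` belong to `K`, then `vol K ≥ vol P + c'δ` or
`vol K° ≥ vol P' + c'δ`. -/
theorem volume_gain_over_P (n : ℕ) (hn : 0 < n) (v : Fin (n + 1) → Euc n)
    (hv : IsRegularSimplex v) :
    ∃ δ₀ > 0, ∃ c' > 0, ∀ (δ : ℝ) (K : Set (Euc n))
      (tp td : Finset (Fin (n + 1)) → ℝ) (x xd : Finset (Fin (n + 1)) → Euc n),
      0 < δ → δ < δ₀ → IsConvexBody K →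
      IsLeast {d : ℝ | 0 < d ∧ (1 - d) • simplexHull v ⊆ K ∧ K ⊆ simplexHull v} δ →
      (∀ s : Finset (Fin (n + 1)), s.card = n → centroidOf v s ∈ K) →
      (∀ s : Finset (Fin (n + 1)), 0 < s.card → s.card ≤ n →
        IsTangency (faceOf v s) (centroidOf v s) K (tp s) (x s) ∧
        IsTangency (dualFace v s) (dualCentroid v s) (polarAt K 0) (td s) (xd s)) →
      (volume K).toReal ≥ (volume (flagPolytope x)).toReal + c' * δ ∨
      (volume (polarAt K 0)).toReal ≥ (volume (flagPolytope xd)).toReal + c' * δ := by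
  have hn' : (0 : ℝ) < n := by positivity
  have hn1 : (1 : ℝ) ≤ n := by exact_mod_cast hn
  obtain ⟨r₀, hr₀, hr₀n, κ, hκ, hgain⟩ := volume_gain hn hv (T := (n : ℝ) ^ 2)
    (R := 4 * (n + 1)) (one_le_pow₀ hn1) (by linarith)
  -- `C * δ` bounds the distance of all nodes and normals from their unperturbed positions.
  obtain ⟨C, hC⟩ : ∃ C : ℝ, C = 16 * (n : ℝ) ^ 3 * (n + 1) := ⟨_, rfl⟩
  have hn3 : (1 : ℝ) ≤ (n : ℝ) ^ 3 := one_le_pow₀ hn1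
  have hCn : 16 * ((n : ℝ) + 1) ≤ C := by
    rw [hC]; nlinarith
  have hC0 : 0 < C := by linarith
  obtain ⟨ε, hε⟩ : ∃ ε : ℝ, ε = 1 / (16 * (n : ℝ) * (n + 3)) := ⟨_, rfl⟩
  have hε0 : 0 < ε := by rw [hε]; positivity
  have hε1 : ε ≤ 1 := by
    rw [hε, div_le_one (by positivity)]; nlinarith
  refine ⟨min (1 / 2) (min (1 / (16 * n * (n + 4) * C ^ 2)) (r₀ / (4 * (n + 1)))), by positivity,
    κ * ε, by positivity, ?_⟩
  intro δ K tp td x xd hδ0 hδ hK hl hc ht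
  rw [lt_min_iff, lt_min_iff] at hδ
  obtain ⟨hδ1, hδ2, hδ3⟩ := hδ
  rw [lt_div_iff₀ (by positivity)] at hδ2 hδ3
  obtain ⟨hKc, hKconv, -⟩ := hK
  have hKcl := hKc.isClosed
  obtain ⟨-, hK1, hK2⟩ := hl.1
  have h0K : (0 : Euc n) ∈ K := by
    have := hK1 (Set.smul_mem_smul_set (zero_mem_simplexHull hn hv))
    rwa [smul_zero] at this
  have hr : 4 * (n + 1) * δ ≤ r₀ := by linarith
  have hr' := hr.trans hr₀n
  have hnear : NearNodes v (fun _ => 1) (4 * (n + 1) * δ) x := by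
    intro s hs hs2
    rw [one_smul]
    refine (norm_sub_centroid_le hn hv hδ0 hKcl hK1 hK2 hs hs2 (ht s hs hs2).1).trans ?_
    nlinarith
  have hneard : NearNodes v (fun s => (‖centroidOf v s‖ ^ 2)⁻¹) (4 * (n + 1) * δ) xd :=
    fun s hs hs2 => norm_sub_dualCentroid_le hn hv hδ0 hδ1.le hK1 hK2 hs hs2 (ht s hs hs2).2
  have hxd : ∀ s : Finset (Fin (n + 1)), 0 < s.card → s.card ≤ n → xd s ∈ polarAt K 0 :=
    fun s hs hs2 => mem_of_isTangency (ht s hs hs2).2 (isClosed_polarAt_zero K)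
  by_contra! hcon
  have hεδ : 0 ≤ ε * δ := by positivity
  have hA : ∀ g, IsFlag g → ∀ ℓ : Euc n, (∀ k, ⟪ℓ, x (g k)⟫ = 1) → ∀ z ∈ K,
      ⟪ℓ, z⟫ ≤ 1 + ε * δ := by
    intro g hg ℓ hℓ z hz
    by_contra! h
    have := hgain _ _ x K g ℓ z (ε * δ) (boundedScaling_one hn) hr hnear hKconv h0K
      (fun y hy => (norm_le_one_of_mem hv (hK2 hy)).trans (by linarith))
      (fun s hs hs2 => mem_of_isTangency (ht s hs hs2).1 hKcl) hg hℓ hz hεδ h.le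
    linarith [hcon.1]
  have hB : ∀ g, IsFlag g → ∀ ℓ : Euc n, (∀ k, ⟪ℓ, xd (g k)⟫ = 1) → ∀ z ∈ polarAt K 0,
      ⟪ℓ, z⟫ ≤ 1 + ε * δ := by
    intro g hg ℓ hℓ z hz
    by_contra! h
    have := hgain _ _ xd (polarAt K 0) g ℓ z (ε * δ) (boundedScaling_dual hn hv) hr hneard
      (convex_polarAt_zero K) (mem_polarAt_zero.2 fun y _ => by simp)
      (fun y hy => by
        have := norm_le_of_inner_vertex_le hn hv (p := y) (e := 2) fun i =>
          (inner_polar_vertex_le hδ0 hδ1.le hK1 hy i).trans (by linarith)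
        linarith)
      hxd hg hℓ hz hεδ h.le
    linarith [hcon.2]
  obtain ⟨i, y, hy, hyi⟩ := exists_polar_point hδ0 hδ1.le hKcl hKconv h0K hl
  have hxi : x {i} ∈ K := mem_of_isTangency (ht {i} (by simp) (by simp; omega)).1 hKcl
  obtain ⟨j, hij, hj⟩ := exists_far_facet hn hv hδ0 hδ1.le hK1 hK2 hc hy hyi hxi
  have hcardc : ∀ k : Fin (n + 1), ({k}ᶜ : Finset (Fin (n + 1))).card = n := fun k => by
    simp [Finset.card_compl]
  have hrC : 4 * (n + 1) * δ ≤ C * δ := mul_le_mul_of_nonneg_right (by linarith) hδ0.le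
  have hpC : 4 * (n : ℝ) ^ 3 * (4 * (n + 1) * δ) ≤ C * δ := by
    rw [hC]; exact le_of_eq (by ring)
  have hdC : 4 * (n : ℝ) ^ 2 * (4 * (n + 1) * δ) ≤ C * δ := by
    refine le_trans (mul_le_mul_of_nonneg_right ?_ (by positivity)) hpC
    have : (n : ℝ) ^ 2 ≤ n ^ 3 := pow_le_pow_right₀ hn1 (by norm_num)
    linarith
  -- The first- and second-order errors each use up at most a quarter of the available gap.
  have hfirst : (n + 3) * (ε * δ) = δ / (16 * n) := by
    rw [hε]; field_simp
  have hsecond : (n + 4) * (C * δ) ^ 2 ≤ δ / (16 * n) := by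
    rw [le_div_iff₀ (by positivity)]
    have := mul_le_mul_of_nonneg_left hδ2.le hδ0.le
    linarith
  have hsmall : δ / (16 * n) ≤ 1 / 2 := by
    rw [div_le_iff₀ (by positivity)]; nlinarith
  have hsq : 0 ≤ (C * δ) ^ 2 := sq_nonneg _
  have hρ1 : C * δ ≤ 1 := by
    refine (sq_le_one_iff₀ (by positivity)).1 ?_
    have : 0 ≤ (n + 3) * (C * δ) ^ 2 := by positivity
    linarith
  have hερ : (n + 1) * (ε * δ) ≤ C * δ := by
    rw [← mul_assoc]
    refine mul_le_mul_of_nonneg_right ?_ hδ0.le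
    have := mul_le_mul_of_nonneg_left hε1 (by positivity : (0 : ℝ) ≤ n + 1)
    linarith
  have hfin := facet_gap_le (K := K) hn hv (ρ := C * δ) (η := ε * δ) hεδ
    hρ1 hερ (by linarith)
    (p := fun i => x {i}) (w := fun j => xd {j}ᶜ)
    (fun k => by
      have := hnear {k} (by simp) (by simp; omega)
      simp only [centroidOf, Finset.card_singleton, Nat.cast_one, inv_one, one_smul,
        Finset.sum_singleton] at this
      exact this.trans hrC)
    (fun k => by
      have := hneard {k}ᶜ (by rw [hcardc]; exact hn) (hcardc k).le
      rw [← dualCentroid_compl_singleton hn hv]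
      exact this.trans hrC)
    (fun k => hxd _ (by rw [hcardc]; exact hn) (hcardc k).le)
    (fun k => neg_smul_vertex_mem_polar hn hv hK2 k)
    (fun z hz k => inner_polar_vertex_ge hn hv hc hz k)
    (fun a b hab => by
      obtain ⟨g, hg, ℓ, h1, h2, h3⟩ :=
        exists_primal_normal hn hv (boundedScaling_one hn) hr' hnear hab
      exact ⟨ℓ, h2, h3.trans hpC, hA g hg ℓ h1⟩)
    (fun a b hab => by
      obtain ⟨g, hg, ℓ, h1, h2, h3⟩ :=
        exists_dual_normal hn hv (boundedScaling_dual hn hv) hr' hneard hab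
      exact ⟨ℓ, h2, h3.trans hdC, hB g hg ℓ h1⟩) hij
  have hgap : δ / (4 * n) = 4 * (δ / (16 * n)) := by field_simp; norm_num
  have hpos : 0 < δ / (16 * n) := by positivity
  linarith
end
end

section
/- Let δ > 0 be small enough and let K₁ be a convex body with (1 − (n+1)δ)Δ_n ⊂ K₁ ⊂ Δ_n. Let S be a simplex of minimal volume containing K₁ and set κ₀ = (n+1)·((1 − (n+1)δ)^{−n} − 1). Then for every κ with κ₀ < κ < 1, one has (1 − κ)S ⊂ K₁ ⊂ S. -/
/-!
Write `t = 1 - (n + 1)δ` and `Δ = simplexHull v`. Since `Δ` is itself a simplex containing `K₁`,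
minimality gives `vol S ≤ vol Δ`, so the convex set `C = t⁻¹ • S`, which contains `Δ`, has volume
at most `t⁻ⁿ vol Δ`.

On the other hand, let `p ∈ C` have `i`-th barycentric coordinate `λᵢ(p) ≤ 0` with respect to `Δ`.
The affine map fixing the vertices `vⱼ` (`j ≠ i`) and sending `vᵢ` to `p` has determinant `λᵢ(p)`
and maps `Δ` into `C`, on the other side of the facet hyperplane `λᵢ = 0`. Hence
`vol Δ * (1 - λᵢ(p)) ≤ vol C` (`ofReal_mul_volume_le`), and therefore `λᵢ(p) ≥ 1 - t⁻ⁿ`.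

The centroid of `Δ` is the origin, so a contraction by the factor `1 - κ` moves all barycentric
coordinates of points of `C` towards `1 / (n + 1)`. As `(1 - κ)(1 + κ₀) ≤ 1`, they become
nonnegative, which says `(1 - κ) • C ⊆ Δ`, i.e. `(1 - κ) • S ⊆ t • Δ ⊆ K₁`.
-/

open MeasureTheory Metric Set Pointwise RealInnerProductSpace

noncomputable section

/-- An `n`-dimensional simplex: the convex hull of `n+1` affinely independent
points. -/
def IsSimplex {n : ℕ} (S : Set (Euc n)) : Prop :=
  ∃ p : Fin (n + 1) → Euc n, AffineIndependent ℝ p ∧ S = convexHull ℝ (Set.range p)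

theorem IsRegularSimplex.inner_sum_smul {n : ℕ} {v : Fin (n + 1) → Euc n}
    (hv : IsRegularSimplex v) (w : Fin (n + 1) → ℝ) (i : Fin (n + 1)) :
    ⟪∑ j, w j • v j, v i⟫ = w i * (1 + 1 / n) - (∑ j, w j) * (1 / n) := by
  have h : ∀ j, ⟪w j • v j, v i⟫ = w j * (-(1 / (n : ℝ))) +
      (if j = i then w j * (1 + 1 / (n : ℝ)) else 0) := by
    intro j
    rw [real_inner_smul_left]
    by_cases hj : j = i
    · subst hj
      rw [real_inner_self_eq_norm_sq, hv.1 j, if_pos rfl]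
      ring
    · rw [hv.2 j i hj, if_neg hj, add_zero]
  rw [sum_inner, Finset.sum_congr rfl fun j _ => h j, Finset.sum_add_distrib,
    ← Finset.sum_mul, Finset.sum_ite_eq' Finset.univ i, if_pos (Finset.mem_univ i)]
  ring

theorem IsRegularSimplex.affineIndependent {n : ℕ} {v : Fin (n + 1) → Euc n}
    (hv : IsRegularSimplex v) : AffineIndependent ℝ v := by
  rw [affineIndependent_iff_of_fintype]
  intro w hw h0 i
  rw [Finset.weightedVSub_eq_linear_combination _ hw] at h0
  have h := hv.inner_sum_smul w i
  rw [h0, hw, inner_zero_left] at h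
  have hpos : (0 : ℝ) < 1 + 1 / n := by positivity
  have h' : w i * (1 + 1 / n) = 0 := by linarith
  exact (mul_eq_zero.1 h').resolve_right hpos.ne'

/-- The affine basis formed by the vertices of a regular simplex. -/
def IsRegularSimplex.basis {n : ℕ} {v : Fin (n + 1) → Euc n}
    (hv : IsRegularSimplex v) : AffineBasis (Fin (n + 1)) ℝ (Euc n) :=
  ⟨v, hv.affineIndependent,
    hv.affineIndependent.affineSpan_eq_top_iff_card_eq_finrank_add_one.2 (by simp)⟩

/-- The origin is the centroid of the regular simplex. -/
theorem IsRegularSimplex.coord_zero {n : ℕ} (hn : 0 < n) {v : Fin (n + 1) → Euc n}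
    (hv : IsRegularSimplex v) (i : Fin (n + 1)) :
    hv.basis.coord i 0 = 1 / ((n : ℝ) + 1) := by
  have h := hv.inner_sum_smul (fun j => hv.basis.coord j 0) i
  have h0 : ∑ j, hv.basis.coord j 0 • v j = 0 := hv.basis.linear_combination_coord_eq_self 0
  rw [h0, hv.basis.sum_coord_apply_eq_one, inner_zero_left] at h
  have hn' : (0 : ℝ) < n := by exact_mod_cast hn
  field_simp at h ⊢
  linarith

theorem affineMap_smul {V : Type*} [AddCommGroup V] [Module ℝ V] (f : V →ᵃ[ℝ] ℝ) (s : ℝ) (x : V) :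
    f (s • x) = s * f x + (1 - s) * f 0 := by
  have h : ∀ y, f y = f.linear y + f 0 := fun y => congrFun f.decomp y
  rw [h (s • x), h x, map_smul, smul_eq_mul]
  ring

/-- A convex set `C` containing a simplex with barycentric coordinates `λⱼ` and a point `p` with
`λᵢ(p) ≤ 0` has at least `1 - λᵢ(p)` times the volume of the simplex: besides the simplex it
contains the cone with apex `p` over the `i`-th facet, whose volume is `-λᵢ(p)` times that of the
simplex. -/
theorem ofReal_mul_volume_le {n : ℕ} (b : AffineBasis (Fin (n + 1)) ℝ (Euc n)) {C : Set (Euc n)}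
    (hC : Convex ℝ C) (hb : convexHull ℝ (Set.range b) ⊆ C) {p : Euc n} (hp : p ∈ C)
    (i : Fin (n + 1)) (hi : b.coord i p ≤ 0) :
    ENNReal.ofReal (1 - b.coord i p) * volume (convexHull ℝ (Set.range b)) ≤ volume C := by
  set T := convexHull ℝ (Set.range b) with hT
  have hTmem : ∀ x ∈ T, ∀ j, 0 ≤ b.coord j x := by
    intro x hx
    rw [hT, b.convexHull_eq_nonneg_coord] at hx
    exact hx
  set c := b.coord i with hc
  have hcx : ∀ x, c x = c.linear x + c 0 := fun x => congrFun c.decomp x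
  have hcb : c (b i) = 1 := b.coord_apply_eq i
  set A := LinearMap.transvection c.linear (p - b i) with hA
  have hAx : ∀ x, c 0 • (p - b i) +ᵥ A x = x + c x • (p - b i) := by
    intro x
    rw [hA, LinearMap.transvection.apply, hcx x, vadd_eq_add]
    module
  have hlin : c.linear (p - b i) = c p - 1 := by
    have h1 := hcx p
    have h2 := hcx (b i)
    rw [map_sub]
    linarith
  set T' := c 0 • (p - b i) +ᵥ (A '' T) with hT'
  have hvol : volume T' = ENNReal.ofReal (-c p) * volume T := by
    rw [hT', measure_vadd, Measure.addHaar_image_linearMap, hA, LinearMap.transvection.det, hlin]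
    congr 2
    rw [add_sub_cancel, abs_of_nonpos hi]
  have hT'mem : ∀ y ∈ T', ∃ x ∈ T, y = x + c x • (p - b i) := by
    rintro y ⟨_, ⟨x, hx, rfl⟩, rfl⟩
    exact ⟨x, hx, hAx x⟩
  have hT'C : T' ⊆ C := by
    intro y hy
    obtain ⟨x, hx, rfl⟩ := hT'mem y hy
    have hsum : x + c x • (p - b i) = ∑ j, b.coord j x • (if j = i then p else b j) := by
      have : ∀ j, b.coord j x • (if j = i then p else b j) =
          b.coord j x • b j + (if j = i then b.coord j x • (p - b j) else 0) := by
        intro j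
        split_ifs
        · module
        · rw [add_zero]
      rw [Finset.sum_congr rfl fun j _ => this j, Finset.sum_add_distrib,
        b.linear_combination_coord_eq_self, Finset.sum_ite_eq' Finset.univ i,
        if_pos (Finset.mem_univ i)]
    rw [hsum]
    refine hC.sum_mem (fun j _ => hTmem x hx j) (b.sum_coord_apply_eq_one x) fun j _ => ?_
    split_ifs
    · exact hp
    · exact hb (subset_convexHull ℝ _ ⟨j, rfl⟩)
  have hT'neg : ∀ y ∈ T', c y ≤ 0 := by
    intro y hy
    obtain ⟨x, hx, rfl⟩ := hT'mem y hy
    have h1 := hcx x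
    have h2 : c (x + c x • (p - b i)) = c x * c p := by
      rw [hcx (x + _), map_add, map_smul, hlin, smul_eq_mul]
      linear_combination -h1
    rw [h2]
    exact mul_nonpos_of_nonneg_of_nonpos (hTmem x hx i) hi
  have hTmeas : MeasurableSet T :=
    ((Set.finite_range b).isCompact_convexHull ℝ).isClosed.measurableSet
  -- The two pieces only meet in the facet hyperplane.
  have hdisj : AEDisjoint volume T' T := by
    let H : AffineSubspace ℝ (Euc n) := (AffineSubspace.mk' (0 : ℝ) ⊥).comap c
    have hH : ∀ x, x ∈ H ↔ c x = 0 := by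
      intro x
      simp [H, AffineSubspace.mem_comap, AffineSubspace.mem_mk']
    have hHtop : H ≠ ⊤ := by
      intro h
      have : b i ∈ H := by rw [h]; trivial
      rw [hH, hcb] at this
      exact one_ne_zero this
    refine measure_mono_null ?_ (Measure.addHaar_affineSubspace volume H hHtop)
    rintro x ⟨hx', hx⟩
    exact (hH x).2 (le_antisymm (hT'neg x hx') (hTmem x hx i))
  calc ENNReal.ofReal (1 - c p) * volume T
      = volume T' + volume T := by
        rw [hvol, show 1 - c p = -c p + 1 by ring,
          ENNReal.ofReal_add (neg_nonneg.2 hi) zero_le_one, ENNReal.ofReal_one, add_mul, one_mul]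
    _ = volume (T' ∪ T) := (measure_union₀ hTmeas.nullMeasurableSet hdisj).symm
    _ ≤ volume C := measure_mono (Set.union_subset hT'C hb)

/-- If `(1 − (n+1)δ)Δₙ ⊆ K₁ ⊆ Δₙ` with `δ` small and `S` is a minimal-volume
simplex containing `K₁`, then `(1 − κ)S ⊆ K₁ ⊆ S` for every
`κ₀ < κ < 1`, where `κ₀ = (n+1)((1 − (n+1)δ)^{−n} − 1)`. -/
theorem minimal_volume_simplex_sandwich (n : ℕ) (hn : 0 < n)
    (v : Fin (n + 1) → Euc n) (hv : IsRegularSimplex v) :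
    ∃ δ₀ > 0, ∀ δ : ℝ, 0 < δ → δ < δ₀ →
      ∀ K₁ : Set (Euc n), IsConvexBody K₁ →
        (1 - ((n : ℝ) + 1) * δ) • simplexHull v ⊆ K₁ → K₁ ⊆ simplexHull v →
        ∀ S : Set (Euc n), IsSimplex S → K₁ ⊆ S →
          (∀ S' : Set (Euc n), IsSimplex S' → K₁ ⊆ S' → volume S ≤ volume S') →
          ∀ κ : ℝ, ((n : ℝ) + 1) * ((1 - ((n : ℝ) + 1) * δ) ^ (n : ℕ))⁻¹ -
              ((n : ℝ) + 1) < κ → κ < 1 →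
            (1 - κ) • S ⊆ K₁ ∧ K₁ ⊆ S := by
  have hn1 : (0 : ℝ) < (n : ℝ) + 1 := by positivity
  refine ⟨1 / ((n : ℝ) + 1), by positivity, ?_⟩
  intro δ hδ hδ' K₁ hK htK hKΔ S hS hKS hmin κ hκ hκ1
  refine ⟨?_, hKS⟩
  obtain ⟨t, ht⟩ : ∃ t, t = 1 - ((n : ℝ) + 1) * δ := ⟨_, rfl⟩
  rw [← ht] at htK hκ
  have ht0 : 0 < t := by
    rw [lt_div_iff₀ hn1] at hδ'
    linarith
  have ht1 : t ≤ 1 := by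
    have := mul_pos hn1 hδ
    linarith
  obtain ⟨e, he⟩ : ∃ e, e = (t ^ n)⁻¹ := ⟨_, rfl⟩
  rw [← he] at hκ
  have he1 : 1 ≤ e := by
    rw [he]
    exact (one_le_inv₀ (pow_pos ht0 n)).2 (pow_le_one₀ ht0.le ht1)
  have hΔ : IsSimplex (simplexHull v) := ⟨v, hv.affineIndependent, rfl⟩
  have hvolS : volume S ≤ volume (simplexHull v) := hmin _ hΔ hKΔ
  have hvolΔ : volume (simplexHull v) ≠ ⊤ :=
    ((Set.finite_range v).isCompact_convexHull ℝ).measure_lt_top.ne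
  have hvolΔ0 : volume (simplexHull v) ≠ 0 :=
    (lt_of_lt_of_le (isOpen_interior.measure_pos volume hK.2.2)
      (measure_mono (interior_subset.trans hKΔ))).ne'
  have hSconv : Convex ℝ S := by
    obtain ⟨q, -, rfl⟩ := hS
    exact convex_convexHull ℝ _
  have hΔC : simplexHull v ⊆ t⁻¹ • S := by
    intro x hx
    rw [Set.mem_inv_smul_set_iff₀ ht0.ne']
    exact hKS (htK (Set.smul_mem_smul_set hx))
  have hvolC : volume (t⁻¹ • S) ≤ ENNReal.ofReal e * volume (simplexHull v) := by
    rw [Measure.addHaar_smul, finrank_euclideanSpace_fin, inv_pow, ← he,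
      abs_of_nonneg (zero_le_one.trans he1)]
    gcongr
  have hcoord : ∀ p ∈ t⁻¹ • S, ∀ i, 1 - e ≤ hv.basis.coord i p := by
    intro p hp i
    rcases le_or_gt (hv.basis.coord i p) 0 with h | h
    · have h1 := (ofReal_mul_volume_le hv.basis (hSconv.smul _) hΔC hp i h).trans hvolC
      have h2 := (ENNReal.mul_le_mul_iff_left hvolΔ0 hvolΔ).1 h1
      have h3 := (ENNReal.ofReal_le_ofReal_iff (zero_le_one.trans he1)).1 h2
      linarith
    · linarith
  rintro _ ⟨x, hx, rfl⟩
  refine htK ⟨(1 - κ) • t⁻¹ • x, ?_, ?_⟩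
  · change _ ∈ convexHull ℝ (Set.range hv.basis)
    rw [hv.basis.convexHull_eq_nonneg_coord]
    intro i
    have h1 := hcoord (t⁻¹ • x) (Set.smul_mem_smul_set hx) i
    rw [affineMap_smul, hv.coord_zero hn]
    have h2 : (1 - κ) * (1 - e) ≤ (1 - κ) * hv.basis.coord i (t⁻¹ • x) :=
      mul_le_mul_of_nonneg_left h1 (by linarith)
    -- With `κ₀ = (n + 1)(e - 1)`, this is `(1 - κ) κ₀ ≤ κ₀ ≤ κ`.
    have h3 : (1 - κ) * (e - 1) ≤ (1 - (1 - κ)) * (1 / ((n : ℝ) + 1)) := by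
      rw [mul_one_div, le_div_iff₀ hn1]
      have h4 : 0 ≤ (e - 1) * ((n : ℝ) + 1) := mul_nonneg (by linarith) hn1.le
      nlinarith
    linarith
  · change t • (1 - κ) • t⁻¹ • x = (1 - κ) • x
    rw [smul_comm t, smul_inv_smul₀ ht0.ne']
end
end
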